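/- arXiv:1911.01483 — 8 statements merged into one kernel-verified Lean document; each statement's English description precedes it below -/
import Mathlib

section
/- Let (M_n)_{n≥0} be a martingale taking values in ℝ^d with respect to a filtration (F_n), with M_0 = 0, and suppose that for every n ≥ 1 the martingale difference satisfies ‖M_n − M_{n−1}‖ ≤ σ_n almost surely, where the constants σ_n satisfy 0 < σ_n ≤ 1/2. Then for every a > 1 and every n ≥ 1, P(‖M_n‖ ≥ a) ≤ 2 exp(1 − (a−1)² / (2 ∑_{i=1}^n σ_i²)). -/
open MeasureTheory Real

lemma cosh_sq_convex (y u v p q : ℝ) (hp : 0 ≤ p) (hq : 0 ≤ q) (hpq : p + q = 1)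
    (h : y ^ 2 ≤ p * u ^ 2 + q * v ^ 2) : cosh y ≤ p * cosh u + q * cosh v := by
  refine hasSum_le (fun k => ?_) (Real.hasSum_cosh y)
    (((Real.hasSum_cosh u).mul_left p).add ((Real.hasSum_cosh v).mul_left q))
  have h1 : y ^ (2 * k) ≤ p * u ^ (2 * k) + q * v ^ (2 * k) := by
    rw [pow_mul, pow_mul, pow_mul]
    refine (pow_le_pow_left₀ (sq_nonneg y) h k).trans ?_
    have := (convexOn_pow k).2 (x := u ^ 2) (sq_nonneg u) (y := v ^ 2) (sq_nonneg v) hp hq hpq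
    simpa using this
  rw [mul_div_assoc', mul_div_assoc', ← add_div]
  gcongr

lemma cosh_step {E : Type*} [NormedAddCommGroup E] [InnerProductSpace ℝ E] (l s : ℝ)
    (hs : 0 < s) (x e : E) (he : ‖e‖ ≤ s) :
    cosh (l * ‖x + e‖) ≤ cosh (l * ‖x‖) * cosh (l * s)
      + (sinh (l * s) / s) * inner ℝ ((sinh (l * ‖x‖) / ‖x‖) • x) e := by
  rcases eq_or_ne x 0 with rfl | hx
  · simp only [zero_add, norm_zero, mul_zero, cosh_zero, one_mul, smul_zero, inner_zero_left,
      add_zero]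
    rw [cosh_le_cosh, abs_mul, abs_mul, abs_norm, abs_of_pos hs]
    gcongr
  · have hr : 0 < ‖x‖ := norm_pos_iff.2 hx
    have ht := abs_le.1 (abs_real_inner_le_norm x e)
    have hn := norm_add_sq_real x e
    rw [real_inner_smul_left]
    set t := inner ℝ x e
    set r := ‖x‖
    have hre : r * ‖e‖ ≤ r * s := by gcongr
    have he2 : ‖e‖ ^ 2 ≤ s ^ 2 := by gcongr
    have hrs : 0 < 2 * (r * s) := by positivity
    have h1 : -(1 / 2) ≤ t / (2 * (r * s)) := by
      rw [le_div_iff₀ hrs]; linarith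
    have h2 : t / (2 * (r * s)) ≤ 1 / 2 := by
      rw [div_le_iff₀ hrs]; linarith
    have key := cosh_sq_convex (l * ‖x + e‖) (l * (r + s)) (l * (r - s))
      (1 / 2 + t / (2 * (r * s))) (1 / 2 - t / (2 * (r * s))) (by linarith) (by linarith)
      (by ring) (by
        have : (1 / 2 + t / (2 * (r * s))) * (l * (r + s)) ^ 2
          + (1 / 2 - t / (2 * (r * s))) * (l * (r - s)) ^ 2
          = l ^ 2 * (r ^ 2 + 2 * t + s ^ 2) := by
          field_simp; ring
        rw [this, mul_pow, hn]
        gcongr)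
    refine key.trans (le_of_eq ?_)
    rw [mul_add, mul_sub, cosh_add, cosh_sub]
    field_simp
    ring

lemma cosh_mgf (d : ℕ) {Ω : Type*} {m0 : MeasurableSpace Ω} (μ : Measure Ω)
    [IsProbabilityMeasure μ] (ℱ : Filtration ℕ m0)
    (M : ℕ → Ω → EuclideanSpace ℝ (Fin d)) (hM : Martingale M ℱ μ)
    (hM0 : ∀ ω, M 0 ω = 0) (σ : ℕ → ℝ)
    (hσ : ∀ n : ℕ, 1 ≤ n → 0 < σ n)
    (hdiff : ∀ n : ℕ, 1 ≤ n → ∀ᵐ ω ∂μ, ‖M n ω - M (n - 1) ω‖ ≤ σ n) (l : ℝ) (hl : 0 ≤ l) (n : ℕ) :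
    Integrable (fun ω => cosh (l * ‖M n ω‖)) μ ∧
    ∫ ω, cosh (l * ‖M n ω‖) ∂μ ≤ exp (l ^ 2 * (∑ i ∈ Finset.Icc 1 n, (σ i) ^ 2) / 2) := by
  have hB : ∀ n, ∃ B : ℝ, 0 ≤ B ∧ ∀ᵐ ω ∂μ, ‖M n ω‖ ≤ B := by
    intro n
    induction n with
    | zero => exact ⟨0, le_rfl, by simp [hM0]⟩
    | succ n ih =>
      obtain ⟨B, hB0, hB⟩ := ih
      refine ⟨B + σ (n + 1), by linarith [hσ (n + 1) (by omega)], ?_⟩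
      filter_upwards [hB, hdiff (n + 1) (by omega)] with ω h1 h2
      simp only [Nat.add_sub_cancel] at h2
      have := norm_add_le (M n ω) (M (n + 1) ω - M n ω)
      rw [add_sub_cancel] at this
      linarith
  have hmeas : ∀ n, StronglyMeasurable[ℱ n] (M n) := fun n => hM.stronglyMeasurable n
  have hint : ∀ n, Integrable (fun ω => cosh (l * ‖M n ω‖)) μ := by
    intro n
    obtain ⟨B, hB0, hB⟩ := hB n
    refine Integrable.of_bound (C := cosh (l * B)) ?_ ?_
    · exact (by fun_prop : Continuous fun x : EuclideanSpace ℝ (Fin d) => cosh (l * ‖x‖)).comp_aestronglyMeasurable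
        ((hmeas n).mono (ℱ.le n)).aestronglyMeasurable
    · filter_upwards [hB] with ω h
      rw [norm_eq_abs, abs_of_pos (cosh_pos _), cosh_le_cosh, abs_of_nonneg (by positivity),
        abs_of_nonneg (by positivity)]
      gcongr
  refine ⟨hint n, ?_⟩
  induction n with
  | zero => simp [hM0]
  | succ n ih =>
    obtain ⟨B, hB0, hB⟩ := hB n
    have hs := hσ (n + 1) (by omega)
    have hd := hdiff (n + 1) (by omega)
    simp only [Nat.add_sub_cancel] at hd
    set f : Ω → EuclideanSpace ℝ (Fin d) := fun ω => (sinh (l * ‖M n ω‖) / ‖M n ω‖) • M n ω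
    have hf : StronglyMeasurable[ℱ n] f := by
      have h1 : Measurable[ℱ n] fun ω => ‖M n ω‖ := (hmeas n).norm.measurable
      have h2 : Measurable fun r : ℝ => sinh (l * r) / r := by fun_prop
      exact (h2.comp h1).stronglyMeasurable.smul (hmeas n)
    have hfb : ∀ᵐ ω ∂μ, ‖f ω‖ ≤ sinh (l * B) := by
      filter_upwards [hB] with ω h
      have h0 : 0 ≤ sinh (l * ‖M n ω‖) := sinh_nonneg_iff.2 (by positivity)
      have h3 : ‖f ω‖ ≤ sinh (l * ‖M n ω‖) := by
        simp only [f, norm_smul, norm_div, norm_eq_abs, abs_norm, abs_of_nonneg h0]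
        rcases eq_or_ne ‖M n ω‖ 0 with h | h
        · simp [h]
        · rw [div_mul_cancel₀ _ h]
      refine h3.trans (sinh_le_sinh.2 (by gcongr))
    set D : Ω → EuclideanSpace ℝ (Fin d) := M (n + 1) - M n
    have hDi : Integrable D μ := (hM.integrable _).sub (hM.integrable _)
    have hce : μ[D | ℱ n] =ᵐ[μ] 0 := by
      have h1 := condExp_sub (hM.integrable (n + 1)) (hM.integrable n) (ℱ n)
      filter_upwards [h1, hM.condExp_ae_eq (Nat.le_succ n), hM.condExp_ae_eq (le_refl n)]
        with ω h1 h2 h3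
      simp only [D, h1, Pi.sub_apply, h2, h3, sub_self, Pi.zero_apply]
    have hpull := condExp_stronglyMeasurable_bilin_of_bound (innerSL ℝ) (ℱ.le n) hf hDi _ hfb
    have hzero : ∫ ω, inner ℝ (f ω) (D ω) ∂μ = 0 := by
      rw [← integral_condExp (ℱ.le n)]
      refine integral_eq_zero_of_ae ?_
      filter_upwards [hpull, hce] with ω h1 h2
      refine Eq.trans h1 ?_
      rw [h2]; simp
    have hii : Integrable (fun ω => inner ℝ (f ω) (D ω)) μ := by
      refine Integrable.of_bound (C := sinh (l * B) * σ (n + 1))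
        ((hf.mono (ℱ.le n)).aestronglyMeasurable.inner hDi.1) ?_
      filter_upwards [hfb, hd] with ω h1 h2
      exact (norm_inner_le_norm _ _).trans
        (mul_le_mul h1 h2 (norm_nonneg _) ((norm_nonneg _).trans h1))
    have hle : ∫ ω, cosh (l * ‖M (n + 1) ω‖) ∂μ ≤
        ∫ ω, (cosh (l * ‖M n ω‖) * cosh (l * σ (n + 1))
          + (sinh (l * σ (n + 1)) / σ (n + 1)) * inner ℝ (f ω) (D ω)) ∂μ := by
      refine integral_mono_ae (hint _) (((hint n).mul_const _).add (hii.const_mul _)) ?_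
      filter_upwards [hd] with ω h
      have := cosh_step l (σ (n + 1)) hs (M n ω) (M (n + 1) ω - M n ω) h
      rwa [add_sub_cancel] at this
    rw [integral_add ((hint n).mul_const _) (hii.const_mul _), integral_mul_const,
      integral_const_mul, hzero, mul_zero, add_zero] at hle
    refine hle.trans ?_
    rw [Finset.sum_Icc_succ_top (by omega), mul_add, add_div, exp_add]
    refine mul_le_mul ih ?_ (cosh_pos _).le (exp_pos _).le
    rw [← mul_pow]
    exact cosh_le_exp_half_sq _

/-- multidimensional Azuma–Hoeffding type bound. If `M` is an `ℝ^d`-valued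
martingale with `M 0 = 0` and bounded differences `‖M n − M (n−1)‖ ≤ σ n ≤ 1/2`, then for
every `a > 1` and `n ≥ 1`,
`P(‖M n‖ ≥ a) ≤ 2 exp(1 − (a−1)² / (2 ∑_{i=1}^n σ i ²))`. -/
theorem stmt_0 (d : ℕ) {Ω : Type*} {m0 : MeasurableSpace Ω} (μ : Measure Ω)
    [IsProbabilityMeasure μ] (ℱ : Filtration ℕ m0)
    (M : ℕ → Ω → EuclideanSpace ℝ (Fin d)) (hM : Martingale M ℱ μ)
    (hM0 : ∀ ω, M 0 ω = 0) (σ : ℕ → ℝ)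
    (hσ : ∀ n : ℕ, 1 ≤ n → 0 < σ n ∧ σ n ≤ 1 / 2)
    (hdiff : ∀ n : ℕ, 1 ≤ n → ∀ᵐ ω ∂μ, ‖M n ω - M (n - 1) ω‖ ≤ σ n) :
    ∀ a : ℝ, 1 < a → ∀ n : ℕ, 1 ≤ n →
      μ {ω | a ≤ ‖M n ω‖} ≤
        ENNReal.ofReal
          (2 * Real.exp (1 - (a - 1) ^ 2 / (2 * ∑ i ∈ Finset.Icc 1 n, (σ i) ^ 2))) := by
  intro a ha n hn
  set S := ∑ i ∈ Finset.Icc 1 n, (σ i) ^ 2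
  have hS : 0 < S := Finset.sum_pos
    (fun i hi => pow_pos (hσ i (Finset.mem_Icc.1 hi).1).1 2) ⟨1, by simp [hn]⟩
  have hl : 0 ≤ a / S := by positivity
  obtain ⟨hi, hb⟩ := cosh_mgf d μ ℱ M hM hM0 σ (fun n hn => (hσ n hn).1) hdiff (a / S) hl n
  have hmk := mul_meas_ge_le_integral_of_nonneg (μ := μ)
    (Filter.Eventually.of_forall fun ω => (cosh_pos (a / S * ‖M n ω‖)).le) hi (cosh (a / S * a))
  have hsub : {ω | a ≤ ‖M n ω‖} ⊆ {ω | cosh (a / S * a) ≤ cosh (a / S * ‖M n ω‖)} := by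
    intro ω h
    simp only [Set.mem_setOf_eq] at h ⊢
    rw [cosh_le_cosh, abs_of_nonneg (by positivity), abs_of_nonneg (by positivity)]
    gcongr
  rw [ENNReal.le_ofReal_iff_toReal_le (measure_ne_top _ _) (by positivity)]
  refine (measureReal_mono (μ := μ) hsub).trans ?_
  set P := μ.real {ω | cosh (a / S * a) ≤ cosh (a / S * ‖M n ω‖)}
  have hP : 0 ≤ P := measureReal_nonneg
  have hc : exp (a / S * a) / 2 ≤ cosh (a / S * a) := by
    rw [cosh_eq]; have := exp_pos (-(a / S * a)); linarith
  have h1 : exp (a / S * a) / 2 * P ≤ exp ((a / S) ^ 2 * S / 2) :=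
    (mul_le_mul_of_nonneg_right hc hP).trans (hmk.trans hb)
  have h2 : exp ((a / S) ^ 2 * S / 2) = exp (a / S * a) * exp (-(a ^ 2 / (2 * S))) := by
    rw [← exp_add]; congr 1; field_simp; ring
  rw [h2] at h1
  have h3 : P ≤ 2 * exp (-(a ^ 2 / (2 * S))) := by
    have := exp_pos (a / S * a)
    refine le_of_mul_le_mul_left ?_ this
    linarith
  refine h3.trans ?_
  have h4 : (a - 1) ^ 2 / (2 * S) ≤ a ^ 2 / (2 * S) := by
    gcongr <;> linarith
  gcongr
  linarith
end

section
/- Let σ ∈ (0, 1/2], Y ≥ 1, λ > 0 with λ(Y − σ) ≥ 1, and let s ∈ {−1, 1}. Define D(x) = s·(√(Y² + 2Yx + σ²) − Y) for x ∈ [−σ, σ]. Then for every x ∈ [−σ, σ], exp(λ D(x)) ≤ cosh(λσ) + s·(x/σ)·sinh(λσ). (That is, the convex function x ↦ exp(λD(x)) lies below the chord connecting its values at x = −σ and x = σ.) -/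
open Real

lemma aux_tangent (a t : ℝ) (ha : 1 ≤ a) (hb : 1 ≤ a + t) :
    1 + t + t^2 / (2*a) ≤ Real.exp t := by
  rcases le_total 0 t with ht | ht
  · have h := Real.quadratic_le_exp_of_nonneg ht
    have : t^2/(2*a) ≤ t^2/2 := by
      apply div_le_div_of_nonneg_left (sq_nonneg t) (by norm_num) (by linarith)
    linarith
  · have h1 : t^2/(2*a) ≤ t^2/(2*(1-t)) := by
      apply div_le_div_of_nonneg_left (sq_nonneg t) (by linarith) (by linarith)
    have hp : 0 < 2*(1-t) := by linarith
    rcases le_total t (-1) with h | h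
    · rcases le_total t (-2) with h2 | h2
      · have : t^2/(2*(1-t)) ≤ -1 - t := by
          rw [div_le_iff₀ hp]; nlinarith
        have := Real.exp_pos t
        linarith
      · have h3 := Real.add_one_le_exp (t/2)
        have h4 : Real.exp t = Real.exp (t/2) * Real.exp (t/2) := by
          rw [← Real.exp_add]; congr 1; ring
        have h5 : t^2/(2*(1-t)) ≤ t^2/4 := by
          apply div_le_div_of_nonneg_left (sq_nonneg t) (by norm_num) (by linarith)
        nlinarith
    · have h2 := Real.exp_bound (x := t) (by rw [abs_le]; constructor <;> linarith)
        (n := 4) (by norm_num)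
      have h3 := (abs_le.1 h2).1
      simp [Finset.sum_range_succ, Nat.factorial] at h3
      have e4 : |t|^4 = t^4 := by
        rw [show (4:ℕ) = 2*2 by norm_num, pow_mul, sq_abs, ← pow_mul]
      rw [abs_of_nonpos ht] at h3
      have h5 : t^2/(2*(1-t)) ≤ t^2/2 + t^3/6 - t^4*(5/96) := by
        rw [div_le_iff₀ hp]
        have : 0 ≤ (-t)^3 * ((1+t)*(16 - 5*(-t)) + 0) := by
          apply mul_nonneg
          · apply pow_nonneg; linarith
          · nlinarith
        have k3 : 0 ≤ (-t)^3 := by apply pow_nonneg; linarith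
        have k4 : 0 ≤ (-t)^3 * (1+t) := mul_nonneg k3 (by linarith)
        have k5 : 0 ≤ (-t)^3 * (1+t) * (-t) := mul_nonneg k4 (by linarith)
        nlinarith
      norm_num at h3
      nlinarith

theorem aux_chord (σ L p q d : ℝ) (hp : 0 ≤ p) (hq : 0 ≤ q)
    (h : Real.exp 0 ≤ p * Real.exp (L*(σ-d)) + q * Real.exp (L*(-σ-d))) :
    Real.exp (L*d) ≤ p * Real.exp (L*σ) + q * Real.exp (-(L*σ)) := by
  have := mul_le_mul_of_nonneg_left h (Real.exp_pos (L*d)).le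
  have e1 : Real.exp (L*σ) = Real.exp (L*d) * Real.exp (L*(σ-d)) := by
    rw [← Real.exp_add]; congr 1; ring
  have e2 : Real.exp (-(L*σ)) = Real.exp (L*d) * Real.exp (L*(-σ-d)) := by
    rw [← Real.exp_add]; congr 1; ring
  rw [e1, e2]
  rw [Real.exp_zero] at this
  linarith

/-- the convex function `x ↦ exp (λ D x)` with
`D x = s (√(Y² + 2Yx + σ²) − Y)` lies below the chord connecting its values at `x = ±σ`. -/
theorem stmt_1 (σ Y lam s : ℝ) (hσ : σ ∈ Set.Ioc (0 : ℝ) (1/2)) (hY : 1 ≤ Y)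
    (hlam : 0 < lam) (hlamY : 1 ≤ lam * (Y - σ)) (hs : s = -1 ∨ s = 1)
    (D : ℝ → ℝ) (hD : ∀ x, D x = s * (Real.sqrt (Y^2 + 2*Y*x + σ^2) - Y)) :
    ∀ x ∈ Set.Icc (-σ) σ,
      Real.exp (lam * D x) ≤ Real.cosh (lam * σ) + s * (x / σ) * Real.sinh (lam * σ) := by
  intro x ⟨hx1, hx2⟩
  obtain ⟨h0, h12⟩ := hσ
  have hnn : 0 ≤ Y^2 + 2*Y*x + σ^2 := by nlinarith [sq_nonneg (Y-σ)]
  have hr0 := Real.sqrt_nonneg (Y^2 + 2*Y*x + σ^2)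
  have hr2 := Real.sq_sqrt hnn
  have hrl : Y - σ ≤ √(Y^2 + 2*Y*x + σ^2) := Real.le_sqrt_of_sq_le (by nlinarith)
  have hru : √(Y^2 + 2*Y*x + σ^2) ≤ Y + σ := by
    rw [Real.sqrt_le_left (by linarith)]; nlinarith
  rw [hD]
  generalize √(Y^2 + 2*Y*x + σ^2) = r at *
  have hp : 0 ≤ (σ + x)/(2*σ) := div_nonneg (by linarith) (by linarith)
  have hq : 0 ≤ (σ - x)/(2*σ) := div_nonneg (by linarith) (by linarith)
  have hpq : (σ + x)/(2*σ) + (σ - x)/(2*σ) = 1 := by field_simp; ring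
  have hpx : σ * ((σ + x)/(2*σ)) - σ * ((σ - x)/(2*σ)) = x := by field_simp; ring
  have hxs : x/σ = (σ + x)/(2*σ) - (σ - x)/(2*σ) := by field_simp; ring
  rw [Real.cosh_eq, Real.sinh_eq, hxs]
  generalize (σ + x)/(2*σ) = p at *
  generalize (σ - x)/(2*σ) = q at *
  obtain rfl : q = 1 - p := by linarith
  rcases hs with rfl | rfl
  · have key := aux_chord σ lam (1-p) p (-(r-Y)) hq hp (by
      have a1 := Real.add_one_le_exp (lam*(σ- -(r-Y)))
      have a2 := Real.add_one_le_exp (lam*(-σ- -(r-Y)))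
      have b1 := mul_le_mul_of_nonneg_left a1 hq
      have b2 := mul_le_mul_of_nonneg_left a2 hp
      have hxr : x ≤ r - Y := by
        by_contra hc
        push Not at hc
        nlinarith
      have : 0 ≤ lam * (r - Y - x) := mul_nonneg hlam.le (by linarith)
      have e : lam * x = lam * (σ * p - σ * (1-p)) := by rw [hpx]
      rw [Real.exp_zero]
      nlinarith)
    rw [show lam * (-1 * (r-Y)) = lam * -(r-Y) by ring]
    linarith
  · have key := aux_chord σ lam p (1-p) (r-Y) hp hq (by
      have ha : 1 ≤ lam * r := hlamY.trans (mul_le_mul_of_nonneg_left hrl hlam.le)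
      have a1 := aux_tangent (lam*r) (lam*(σ-(r-Y))) ha (by nlinarith)
      have a2 := aux_tangent (lam*r) (lam*(-σ-(r-Y))) ha (by nlinarith)
      have b1 := mul_le_mul_of_nonneg_left a1 hp
      have b2 := mul_le_mul_of_nonneg_left a2 hq
      have hr : 0 < r := by linarith
      have e : p * (1 + (lam*(σ-(r-Y))) + (lam*(σ-(r-Y)))^2/(2*(lam*r)))
          + (1-p) * (1 + (lam*(-σ-(r-Y))) + (lam*(-σ-(r-Y)))^2/(2*(lam*r))) = 1 := by
        have hx : x = σ * p - σ * (1-p) := hpx.symm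
        rw [hx] at hr2
        field_simp
        linear_combination (-lam) * hr2
      rw [Real.exp_zero]
      linarith)
    rw [one_mul]
    linarith
end

section
/- Let A be a symmetric positive definite d×d real matrix, and let γ_t = a·t^{−r} for t ≥ 1, where a > 0 and r ∈ (1/2, 1). For 1 ≤ s ≤ t define the d×d matrix β̄^t_s = γ_s ∑_{i=s}^{t−1} ∏_{k=s+1}^{i} (I − γ_k A), where the empty product ∏_{k=s+1}^{s} is the identity matrix I, and define φ^t_s = β̄^t_s − A^{−1}. Then ∑_{s=1}^{t−1} ‖φ^t_s‖ = O(t^r) as t → ∞, i.e. there exist constants C₀ > 0 and t₀ such that ∑_{s=1}^{t−1} ‖φ^t_s‖ ≤ C₀ t^r for all t ≥ t₀. -/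
open Matrix Real Finset
open scoped Matrix.Norms.L2Operator

/-- The ordered product `∏_{k=s+1}^{i} (I − γ_k A)` (the empty product, for `i ≤ s`,
is the identity matrix). -/
noncomputable def sgdProd {d : ℕ} (A : Matrix (Fin d) (Fin d) ℝ) (γ : ℕ → ℝ)
    (s i : ℕ) : Matrix (Fin d) (Fin d) ℝ :=
  ((List.range (i - s)).map fun j => (1 : Matrix (Fin d) (Fin d) ℝ) - γ (s + 1 + j) • A).prod

/-- `β̄^t_s = γ_s ∑_{i=s}^{t−1} ∏_{k=s+1}^{i} (I − γ_k A)`. -/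
noncomputable def betaBar {d : ℕ} (A : Matrix (Fin d) (Fin d) ℝ) (γ : ℕ → ℝ)
    (t s : ℕ) : Matrix (Fin d) (Fin d) ℝ :=
  γ s • ∑ i ∈ Finset.Icc s (t - 1), sgdProd A γ s i

lemma aux_q {d : ℕ} (A : Matrix (Fin d) (Fin d) ℝ) (hA : A.PosDef) :
    ∃ μ > (0:ℝ), ∃ g0 > (0:ℝ), ∀ g : ℝ, 0 ≤ g → g ≤ g0 →
      ‖(1 : Matrix (Fin d) (Fin d) ℝ) - g • A‖ ≤ 1 - μ * g := by
  have hH := hA.isHermitian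
  have hpos : ∀ i, 0 < hH.eigenvalues i := fun i => hA.eigenvalues_pos i
  set L : ℝ := 1 + ∑ i, hH.eigenvalues i with hL
  have hL0 : 0 < L := by
    have : 0 ≤ ∑ i, hH.eigenvalues i := Finset.sum_nonneg fun i _ => (hpos i).le
    linarith
  have hle : ∀ i, hH.eigenvalues i < L := by
    intro i
    have := Finset.single_le_sum (f := hH.eigenvalues) (fun i _ => (hpos i).le) (Finset.mem_univ i)
    linarith
  have hone : ‖(1 : Matrix (Fin d) (Fin d) ℝ)‖ ≤ 1 := by
    rw [← Matrix.diagonal_one, Matrix.l2_opNorm_diagonal]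
    refine (pi_norm_le_iff_of_nonneg zero_le_one).2 fun i => by simp
  have hlt : ‖(1 : Matrix (Fin d) (Fin d) ℝ) - L⁻¹ • A‖ < 1 := by
    have hsp := hH.spectral_theorem
    have e : (1 : Matrix (Fin d) (Fin d) ℝ) - L⁻¹ • A =
        (hH.eigenvectorUnitary : Matrix (Fin d) (Fin d) ℝ) *
          Matrix.diagonal (fun i => 1 - L⁻¹ * hH.eigenvalues i) *
          (star hH.eigenvectorUnitary : unitary (Matrix (Fin d) (Fin d) ℝ)) := by
      have h1 : Matrix.diagonal (fun i => 1 - L⁻¹ * hH.eigenvalues i) =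
          (1 : Matrix (Fin d) (Fin d) ℝ) - L⁻¹ • Matrix.diagonal (hH.eigenvalues) := by
        rw [← Matrix.diagonal_one, ← Matrix.diagonal_smul, Matrix.diagonal_sub]
        rfl
      have h2 : A = (hH.eigenvectorUnitary : Matrix (Fin d) (Fin d) ℝ) *
          Matrix.diagonal (hH.eigenvalues) *
          (star hH.eigenvectorUnitary : unitary (Matrix (Fin d) (Fin d) ℝ)) := by
        conv_lhs => rw [hsp]
        rfl
      have h3 : (hH.eigenvectorUnitary : Matrix (Fin d) (Fin d) ℝ) *
          (star hH.eigenvectorUnitary : unitary (Matrix (Fin d) (Fin d) ℝ)) = 1 := by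
        simp
      rw [h1, mul_sub, sub_mul, mul_one, h3, mul_smul_comm, smul_mul_assoc, ← h2]
    rw [e, CStarRing.norm_mul_coe_unitary, CStarRing.norm_coe_unitary_mul,
      Matrix.l2_opNorm_diagonal]
    refine (pi_norm_lt_iff zero_lt_one).2 fun i => ?_
    have h1 : 0 < L⁻¹ * hH.eigenvalues i := mul_pos (inv_pos.2 hL0) (hpos i)
    have h2 : L⁻¹ * hH.eigenvalues i < 1 := by
      rw [inv_mul_lt_iff₀ hL0]; linarith [hle i]
    rw [Real.norm_eq_abs, abs_lt]; constructor <;> linarith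
  refine ⟨(1 - ‖(1 : Matrix (Fin d) (Fin d) ℝ) - L⁻¹ • A‖) * L, mul_pos (by linarith) hL0,
    L⁻¹, inv_pos.2 hL0, fun g hg0 hg => ?_⟩
  have hgL : g * L ≤ 1 := by
    have := mul_le_mul_of_nonneg_right hg hL0.le
    rwa [inv_mul_cancel₀ hL0.ne'] at this
  have e : (1 : Matrix (Fin d) (Fin d) ℝ) - g • A =
      (1 - g * L) • (1 : Matrix (Fin d) (Fin d) ℝ) + (g * L) • (1 - L⁻¹ • A) := by
    rw [smul_sub, smul_smul, mul_assoc, mul_inv_cancel₀ hL0.ne', sub_smul, mul_one, one_smul]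
    abel
  calc _ ≤ ‖(1 - g * L) • (1 : Matrix (Fin d) (Fin d) ℝ)‖ + ‖(g * L) • (1 - L⁻¹ • A)‖ := by
        rw [e]; exact norm_add_le _ _
    _ = (1 - g * L) * ‖(1 : Matrix (Fin d) (Fin d) ℝ)‖ + (g * L) * ‖1 - L⁻¹ • A‖ := by
        rw [norm_smul, norm_smul, Real.norm_of_nonneg (by linarith), Real.norm_of_nonneg (by positivity)]
    _ ≤ (1 - g * L) * 1 + (g * L) * ‖1 - L⁻¹ • A‖ := by
        gcongr
    _ = _ := by ring

/-- Extend a weight satisfying a backward recursion from `k ≥ K` to all `k ≥ 1`. -/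
lemma aux_ext (q g : ℕ → ℝ) (K : ℕ) (hK : 1 ≤ K) : ∀ (w0 : ℕ → ℝ), (∀ k ≥ 1, 0 < w0 k) →
    (∀ k ≥ K, g k + q (k+1) * w0 (k+1) ≤ w0 k) →
    ∃ C > (0:ℝ), ∃ w : ℕ → ℝ, (∀ k ≥ 1, 0 < w k) ∧ (∀ k ≥ 1, w k ≤ C * w0 k) ∧
      ∀ k ≥ 1, g k + q (k+1) * w (k+1) ≤ w k := by
  induction K, hK using Nat.le_induction with
  | base => intro w0 h0 h1; exact ⟨1, one_pos, w0, h0, fun k _ => by simp, h1⟩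
  | succ K hK ih =>
    intro w0 h0 h1
    set M := max (w0 K) (g K + q (K+1) * w0 (K+1)) with hM
    have hM0 : w0 K ≤ M := le_max_left _ _
    have hw0 := h0 K hK
    obtain ⟨C, hC, w, hw, hwC, hrec⟩ := ih (fun k => if k = K then M else w0 k)
      (fun k hk => by
        try dsimp only
        split_ifs
        · linarith
        · exact h0 k hk)
      (fun k hk => by
        try dsimp only
        rw [if_neg (by omega : ¬ k + 1 = K)]
        split_ifs with h
        · subst h; exact le_max_right _ _
        · exact h1 k (by omega))
    refine ⟨C * (M / w0 K), by positivity, w, hw, fun k hk => (hwC k hk).trans ?_, hrec⟩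
    rw [mul_assoc]
    gcongr
    have : 1 ≤ M / w0 K := by rwa [le_div_iff₀ hw0, one_mul]
    split_ifs with h
    · subst h; rw [div_mul_cancel₀ _ hw0.ne']
    · nlinarith [h0 k hk]

lemma aux_back (q g b w : ℕ → ℝ) (t : ℕ) (hq : ∀ k, 0 ≤ q k) (ht : b t ≤ w t)
    (hb : ∀ s ≥ 1, s < t → b s ≤ g s + q (s+1) * b (s+1))
    (hw : ∀ s ≥ 1, s < t → g s + q (s+1) * w (s+1) ≤ w s) :
    ∀ s ≥ 1, s ≤ t → b s ≤ w s := by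
  suffices h : ∀ n s, 1 ≤ s → s + n = t → b s ≤ w s from
    fun s hs hst => h (t - s) s hs (by omega)
  intro n
  induction n with
  | zero => intro s hs e; simp at e; subst e; exact ht
  | succ n ih =>
    intro s hs e
    have := ih (s+1) (by omega) (by omega)
    have := mul_le_mul_of_nonneg_left this (hq (s+1))
    linarith [hb s hs (by omega), hw s hs (by omega)]

lemma aux_pow_up (r : ℝ) (hr : 0 < r) (hr1 : r < 1) (k : ℕ) (hk : 1 ≤ k) :
    ((k+1 : ℕ) : ℝ) ^ r ≤ (k:ℝ) ^ r + (k:ℝ) ^ (r-1) := by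
  have hk0 : (0:ℝ) < k := by exact_mod_cast hk
  have h := rpow_one_add_le_one_add_mul_self (s := 1/(k:ℝ)) (p := r)
    (by have : 0 < 1/(k:ℝ) := by positivity
        linarith) hr.le hr1.le
  have e : ((k+1 : ℕ) : ℝ) = k * (1 + 1/(k:ℝ)) := by push_cast; field_simp
  rw [e, Real.mul_rpow hk0.le (by positivity), Real.rpow_sub_one hk0.ne']
  have hp : 0 < (k:ℝ)^r := by positivity
  calc _ ≤ (k:ℝ)^r * (1 + r * (1/k)) := by gcongr
    _ ≤ (k:ℝ)^r * (1 + 1 * (1/k)) := by gcongr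
    _ = _ := by ring

lemma aux_pow_sum (r : ℝ) (hr : 0 < r) (hr1 : r < 1) (n : ℕ) :
    ∑ s ∈ Finset.Icc 1 n, (s:ℝ) ^ (r-1) ≤ r⁻¹ * (n:ℝ) ^ r := by
  induction n with
  | zero => simp [Real.zero_rpow hr.ne']
  | succ n ih =>
    rw [Finset.sum_Icc_succ_top (by omega)]
    have hk0 : (0:ℝ) < ((n+1:ℕ):ℝ) := by positivity
    have hi : 1/((n+1:ℕ):ℝ) ≤ 1 := by
      rw [div_le_one hk0]; push_cast; linarith [(Nat.cast_nonneg n : (0:ℝ) ≤ n)]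
    have h := rpow_one_add_le_one_add_mul_self (s := -(1/((n+1:ℕ):ℝ))) (p := r)
      (by linarith) hr.le hr1.le
    have e : (n:ℝ) = ((n+1:ℕ):ℝ) * (1 + -(1/((n+1:ℕ):ℝ))) := by
      rw [mul_add, mul_neg, mul_one_div_cancel hk0.ne']; push_cast; ring
    have h2 : (n:ℝ)^r ≤ ((n+1:ℕ):ℝ)^r * (1 + r * -(1/((n+1:ℕ):ℝ))) := by
      calc (n:ℝ)^r = ((n+1:ℕ):ℝ)^r * (1 + -(1/((n+1:ℕ):ℝ)))^r := by
            rw [← Real.mul_rpow hk0.le (by linarith), ← e]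
        _ ≤ _ := by gcongr
    have h3 := mul_le_mul_of_nonneg_left h2 (inv_pos.2 hr).le
    have h4 : r⁻¹ * (((n+1:ℕ):ℝ)^r * (1 + r * -(1/((n+1:ℕ):ℝ)))) =
        r⁻¹ * ((n+1:ℕ):ℝ)^r - ((n+1:ℕ):ℝ)^(r-1) := by
      rw [Real.rpow_sub_one hk0.ne']; field_simp; ring
    linarith

lemma aux_gamma (a r : ℝ) (ha : 0 < a) (hr : 0 < r) (hr1 : r < 1) (s : ℕ) (hs : 1 ≤ s) :
    0 ≤ a * (s:ℝ)^(-r) - a * ((s+1:ℕ):ℝ)^(-r) ∧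
    a * (s:ℝ)^(-r) - a * ((s+1:ℕ):ℝ)^(-r) ≤ a * (s:ℝ)^(-r) / s := by
  have hs0 : (0:ℝ) < s := by exact_mod_cast hs
  have h1 : ((s+1:ℕ):ℝ)^(-r) ≤ (s:ℝ)^(-r) :=
    Real.rpow_le_rpow_of_nonpos hs0 (by push_cast; linarith) (by linarith)
  have hp : 0 < (s:ℝ)^(-r) := by positivity
  refine ⟨by nlinarith, ?_⟩
  have e : ((s+1 : ℕ) : ℝ) = s * (1 + 1/(s:ℝ)) := by push_cast; field_simp
  have hb : (1:ℝ) ≤ 1 + 1/(s:ℝ) := by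
    have : 0 < 1/(s:ℝ) := by positivity
    linarith
  have h2 : 1 - 1/(s:ℝ) ≤ (1 + 1/(s:ℝ))^(-r) := by
    calc 1 - 1/(s:ℝ) ≤ (1 + 1/(s:ℝ))⁻¹ := by
          rw [← one_div, le_div_iff₀ (by linarith)]
          nlinarith [sq_nonneg (1/(s:ℝ))]
      _ = (1 + 1/(s:ℝ))^(-1:ℝ) := by rw [Real.rpow_neg_one]
      _ ≤ _ := Real.rpow_le_rpow_of_exponent_le hb (by linarith)
  rw [e, Real.mul_rpow hs0.le (by linarith)]
  have h3 := mul_le_mul_of_nonneg_left h2 (mul_pos ha hp).le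
  have : a * (s:ℝ)^(-r) * (1 - 1/(s:ℝ)) = a * (s:ℝ)^(-r) - a * (s:ℝ)^(-r) / s := by ring
  linarith

lemma sgdProd_succ {d : ℕ} (A : Matrix (Fin d) (Fin d) ℝ) (γ : ℕ → ℝ) (s i : ℕ) (h : s + 1 ≤ i) :
    sgdProd A γ s i = (1 - γ (s+1) • A) * sgdProd A γ (s+1) i := by
  unfold sgdProd
  obtain ⟨n, rfl⟩ := Nat.exists_eq_add_of_le h
  rw [show s + 1 + n - s = n + 1 by omega, show s + 1 + n - (s+1) = n by omega,
    List.range_succ_eq_map, List.map_cons, List.prod_cons, List.map_map]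
  congr 3
  funext j
  simp only [Function.comp]
  rw [show s + 1 + j.succ = s + 1 + 1 + j by omega]

lemma sgdSum_succ {d : ℕ} (A : Matrix (Fin d) (Fin d) ℝ) (γ : ℕ → ℝ) (t s : ℕ) (h : s < t) :
    ∑ i ∈ Finset.Icc s (t-1), sgdProd A γ s i =
      1 + (1 - γ (s+1) • A) * ∑ i ∈ Finset.Icc (s+1) (t-1), sgdProd A γ (s+1) i := by
  rw [← Finset.insert_Icc_succ_left_eq_Icc (by omega : s ≤ t - 1),
    Finset.sum_insert (by simp), Finset.mul_sum]
  congr 1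
  · simp [sgdProd]
  · refine Finset.sum_congr rfl fun i hi => sgdProd_succ A γ s i ?_
    simpa using (Finset.mem_Icc.1 hi).1

lemma aux_S (q : ℕ → ℝ) (r m : ℝ) (hr : 0 < r) (hm : 0 < m) (K : ℕ) (hK : 1 ≤ K)
    (hq0 : ∀ k, 0 ≤ q k) (hq : ∀ k ≥ K, q k ≤ 1 - m * (k:ℝ)^(-r)) :
    ∃ C > (0:ℝ), ∀ t ≥ K, ∑ s ∈ Finset.Icc 1 t, ∏ k ∈ Finset.Ioc s t, q k ≤ C * (t:ℝ)^r := by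
  set S : ℕ → ℝ := fun t => ∑ s ∈ Finset.Icc 1 t, ∏ k ∈ Finset.Ioc s t, q k with hS
  have hrec : ∀ t, S (t+1) = 1 + q (t+1) * S t := by
    intro t
    simp only [hS]
    rw [Finset.sum_Icc_succ_top (by omega), add_comm, Finset.mul_sum]
    congr 1
    · simp
    · refine Finset.sum_congr rfl fun s hs => ?_
      rw [Finset.prod_Ioc_succ_top (Finset.mem_Icc.1 hs).2, mul_comm]
  refine ⟨max m⁻¹ (S K), lt_max_of_lt_left (inv_pos.2 hm), fun t ht => ?_⟩
  set C := max m⁻¹ (S K) with hC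
  have hC0 : 0 < C := lt_max_of_lt_left (inv_pos.2 hm)
  have hCm : 1 ≤ m * C := by
    have : m⁻¹ ≤ C := le_max_left _ _
    have := mul_le_mul_of_nonneg_left this hm.le
    rwa [mul_inv_cancel₀ hm.ne'] at this
  change S t ≤ _
  induction t, ht using Nat.le_induction with
  | base =>
    have h1 : (1:ℝ) ≤ (K:ℝ)^r := Real.one_le_rpow (by exact_mod_cast hK) hr.le
    have : S K ≤ C := le_max_right _ _
    nlinarith
  | succ t ht ih =>
    rw [hrec]
    have ht0 : (0:ℝ) < ((t+1:ℕ):ℝ) := by positivity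
    have h1 : (t:ℝ)^r ≤ ((t+1:ℕ):ℝ)^r :=
      Real.rpow_le_rpow (by positivity) (by push_cast; linarith) hr.le
    have h2 : S t ≤ C * ((t+1:ℕ):ℝ)^r := ih.trans (by gcongr)
    have h3 : q (t+1) * S t ≤ (1 - m * ((t+1:ℕ):ℝ)^(-r)) * (C * ((t+1:ℕ):ℝ)^r) :=
      (mul_le_mul_of_nonneg_left h2 (hq0 _)).trans
        (mul_le_mul_of_nonneg_right (hq (t+1) (by omega)) (by positivity))
    have h4 : ((t+1:ℕ):ℝ)^(-r) * ((t+1:ℕ):ℝ)^r = 1 := by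
      rw [← Real.rpow_add ht0]; simp
    have h5 : (1 - m * ((t+1:ℕ):ℝ)^(-r)) * (C * ((t+1:ℕ):ℝ)^r) =
        C * ((t+1:ℕ):ℝ)^r - m * C * (((t+1:ℕ):ℝ)^(-r) * ((t+1:ℕ):ℝ)^r) := by ring
    rw [h4] at h5
    linarith

/-- with `φ^t_s = β̄^t_s − A⁻¹` and step sizes `γ_t = a t^{−r}`,
`∑_{s=1}^{t−1} ‖φ^t_s‖ = O(t^r)` in the operator (spectral) norm. -/
theorem stmt_2 (d : ℕ) (A : Matrix (Fin d) (Fin d) ℝ) (hA : A.PosDef)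
    (a r : ℝ) (ha : 0 < a) (hr : 1/2 < r) (hr1 : r < 1)
    (γ : ℕ → ℝ) (hγ : ∀ t : ℕ, 1 ≤ t → γ t = a * (t : ℝ) ^ (-r))
    (φ : ℕ → ℕ → Matrix (Fin d) (Fin d) ℝ)
    (hφ : ∀ t s : ℕ, 1 ≤ s → s ≤ t → φ t s = betaBar A γ t s - A⁻¹) :
    ∃ C₀ > (0 : ℝ), ∃ t₀ : ℕ, ∀ t ≥ t₀,
      ∑ s ∈ Finset.Icc 1 (t - 1), ‖φ t s‖ ≤ C₀ * (t : ℝ) ^ r := by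
  have hr0 : 0 < r := by linarith
  obtain ⟨μ, hμ, g0, hg0, hnorm⟩ := aux_q A hA
  set q : ℕ → ℝ := fun k => ‖(1 : Matrix (Fin d) (Fin d) ℝ) - γ k • A‖ with hqdef
  have hq0 : ∀ k, 0 ≤ q k := fun k => norm_nonneg _
  set m := μ * a with hm
  have hm0 : 0 < m := mul_pos hμ ha
  -- choose K
  have hK : ∃ K ≥ 1, (∀ k ≥ K, q k ≤ 1 - m * (k:ℝ)^(-r)) ∧
      ∀ k ≥ K, (k:ℝ)^(r-1) ≤ m / 2 := by
    have t1 : Filter.Tendsto (fun k : ℕ => a * (k:ℝ)^(-r)) Filter.atTop (nhds 0) := by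
      have := ((tendsto_rpow_neg_atTop hr0).comp tendsto_natCast_atTop_atTop).const_mul a
      simpa using this
    have t2 : Filter.Tendsto (fun k : ℕ => (k:ℝ)^(r-1)) Filter.atTop (nhds 0) := by
      have := ((tendsto_rpow_neg_atTop (by linarith : 0 < 1 - r)).comp
        tendsto_natCast_atTop_atTop)
      simpa [Function.comp_def] using this
    have e1 := t1.eventually (ge_mem_nhds hg0)
    have e2 := t2.eventually (ge_mem_nhds (half_pos hm0))
    obtain ⟨K, hK⟩ := Filter.eventually_atTop.1 (e1.and e2)
    refine ⟨max K 1, le_max_right _ _, fun k hk => ?_, fun k hk => (hK k (by omega)).2⟩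
    have h1 := hγ k (by omega)
    have h2 := hnorm (γ k) (by rw [h1]; positivity) (by rw [h1]; exact (hK k (by omega)).1)
    calc q k ≤ 1 - μ * γ k := h2
      _ = _ := by rw [h1, hm]; ring
  obtain ⟨K, hK1, hqK, hKs⟩ := hK
  obtain ⟨C1, hC1, hS⟩ := aux_S q r m hr0 hm0 K hK1 hq0 hqK
  -- weight for M
  obtain ⟨C2, hC2, w, hwpos, hwC, hwrec⟩ := aux_ext q (fun _ => 1) K hK1
    (fun k => 2 / m * (k:ℝ)^r)
    (fun k hk => by
      have : (0:ℝ) < k := by exact_mod_cast hk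
      positivity)
    (fun k hk => by
      try dsimp only
      have hk0 : (0:ℝ) < ((k+1:ℕ):ℝ) := by positivity
      have h1 := mul_le_mul_of_nonneg_right (hqK (k+1) (by omega))
        (by positivity : 0 ≤ 2 / m * ((k+1:ℕ):ℝ)^r)
      have h4 : ((k+1:ℕ):ℝ)^(-r) * ((k+1:ℕ):ℝ)^r = 1 := by
        rw [← Real.rpow_add hk0]; simp
      have h5 : (1 - m * ((k+1:ℕ):ℝ)^(-r)) * (2 / m * ((k+1:ℕ):ℝ)^r) =
          2 / m * ((k+1:ℕ):ℝ)^r - 2 * (m / m) * (((k+1:ℕ):ℝ)^(-r) * ((k+1:ℕ):ℝ)^r) := by ring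
      rw [h4, div_self hm0.ne'] at h5
      have h6 := aux_pow_up r hr0 hr1 k (by omega)
      have h7 := hKs k hk
      have h8 : 2 / m * ((k+1:ℕ):ℝ)^r ≤ 2 / m * ((k:ℝ)^r + m / 2) := by
        gcongr; linarith
      have h9 : 2 / m * ((k:ℝ)^r + m / 2) = 2 / m * (k:ℝ)^r + 1 := by
        field_simp
      linarith)
  set C3 := a * (C2 * (2 / m)) with hC3
  have hC30 : 0 < C3 := by positivity
  -- weight for phi
  obtain ⟨C4, hC4, v, hvpos, hvC, hvrec⟩ := aux_ext q (fun k => C3 / k) K hK1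
    (fun k => 2 * C3 / m * (k:ℝ)^(r-1))
    (fun k hk => by
      have : (0:ℝ) < k := by exact_mod_cast hk
      positivity)
    (fun k hk => by
      try dsimp only
      have hkk : (1:ℝ) ≤ k := by exact_mod_cast hK1.trans hk
      have hk0 : (0:ℝ) < ((k+1:ℕ):ℝ) := by positivity
      have h1 := mul_le_mul_of_nonneg_right (hqK (k+1) (by omega))
        (by positivity : 0 ≤ 2 * C3 / m * ((k+1:ℕ):ℝ)^(r-1))
      have h4 : ((k+1:ℕ):ℝ)^(-r) * ((k+1:ℕ):ℝ)^(r-1) = (((k+1:ℕ):ℝ))⁻¹ := by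
        rw [← Real.rpow_add hk0, ← Real.rpow_neg_one]; congr 1; ring
      have h5 : (1 - m * ((k+1:ℕ):ℝ)^(-r)) * (2 * C3 / m * ((k+1:ℕ):ℝ)^(r-1)) =
          2 * C3 / m * ((k+1:ℕ):ℝ)^(r-1)
            - 2 * C3 * (m / m) * (((k+1:ℕ):ℝ)^(-r) * ((k+1:ℕ):ℝ)^(r-1)) := by ring
      rw [h4, div_self hm0.ne', mul_one] at h5
      have h6 : ((k+1:ℕ):ℝ)^(r-1) ≤ (k:ℝ)^(r-1) :=
        Real.rpow_le_rpow_of_nonpos (by linarith) (by push_cast; linarith) (by linarith)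
      have h7 : 2 * C3 / m * ((k+1:ℕ):ℝ)^(r-1) ≤ 2 * C3 / m * (k:ℝ)^(r-1) := by gcongr
      have h8 : C3 / k ≤ 2 * C3 * (((k+1:ℕ):ℝ))⁻¹ := by
        rw [← div_eq_mul_inv, div_le_div_iff₀ (by linarith) hk0]
        push_cast
        nlinarith
      linarith)
  set C5 := ‖A⁻¹‖ with hC5
  refine ⟨C4 * (2 * C3 / m) * r⁻¹ + C5 * C1, by positivity, K, fun t ht => ?_⟩
  set M : ℕ → Matrix (Fin d) (Fin d) ℝ :=
    fun s => ∑ i ∈ Finset.Icc s (t-1), sgdProd A γ s i with hMdef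
  have hMt : M t = 0 := by
    simp only [hMdef]
    rw [Finset.Icc_eq_empty (by omega), Finset.sum_empty]
  have hMrec : ∀ s, s < t → M s = 1 + (1 - γ (s+1) • A) * M (s+1) :=
    fun s hs => sgdSum_succ A γ t s hs
  have hone : ‖(1 : Matrix (Fin d) (Fin d) ℝ)‖ ≤ 1 := by
    simpa using hnorm 0 le_rfl hg0.le
  have hMb : ∀ s ≥ 1, s ≤ t → ‖M s‖ ≤ w s := by
    refine aux_back q (fun _ => 1) (fun s => ‖M s‖) w t hq0 ?_ ?_ (fun s hs _ => hwrec s hs)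
    · simp only [hMt, norm_zero]; exact (hwpos t (by omega)).le
    · intro s hs hst
      try dsimp only
      rw [hMrec s hst]
      exact (norm_add_le _ _).trans (add_le_add hone (norm_mul_le _ _))
  have hφM : ∀ s ≥ 1, s ≤ t → φ t s = γ s • M s - A⁻¹ := fun s hs hst => hφ t s hs hst
  have hinv : A * A⁻¹ = 1 := Matrix.mul_nonsing_inv A ((Matrix.isUnit_iff_isUnit_det A).1 hA.isUnit)
  have hφrec : ∀ s ≥ 1, s < t →
      φ t s = (γ s - γ (s+1)) • M s + (1 - γ (s+1) • A) * φ t (s+1) := by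
    intro s hs hst
    rw [hφM s hs hst.le, hφM (s+1) (by omega) hst, mul_sub, mul_smul_comm, sub_smul]
    have h1 : (1 - γ (s+1) • A) * A⁻¹ = A⁻¹ - γ (s+1) • (1 : Matrix (Fin d) (Fin d) ℝ) := by
      rw [sub_mul, one_mul, smul_mul_assoc, hinv]
    have h2 : γ (s+1) • M s = γ (s+1) • (1 : Matrix (Fin d) (Fin d) ℝ) +
        γ (s+1) • ((1 - γ (s+1) • A) * M (s+1)) := by
      rw [hMrec s hst, smul_add]
    rw [h1, h2]
    abel
  have hφb : ∀ s ≥ 1, s ≤ t → ‖φ t s‖ ≤ v s + C5 * ∏ k ∈ Finset.Ioc s t, q k := by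
    refine aux_back q (fun k => C3 / k) (fun s => ‖φ t s‖)
      (fun s => v s + C5 * ∏ k ∈ Finset.Ioc s t, q k) t hq0 ?_ ?_ ?_
    · try dsimp only
      rw [hφM t (by omega) le_rfl, hMt]
      simp only [smul_zero, zero_sub, norm_neg, Finset.Ioc_self, Finset.prod_empty, mul_one]
      linarith [hvpos t (by omega)]
    · intro s hs hst
      try dsimp only
      rw [hφrec s hs hst]
      refine (norm_add_le _ _).trans (add_le_add ?_ (norm_mul_le _ _))
      have hs0 : (0:ℝ) < s := by exact_mod_cast hs
      obtain ⟨g1, g2⟩ := aux_gamma a r ha hr0 hr1 s hs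
      rw [norm_smul, hγ s hs, hγ (s+1) (by omega), Real.norm_of_nonneg g1]
      calc _ ≤ a * (s:ℝ)^(-r) / s * (C2 * (2 / m * (s:ℝ)^r)) :=
            mul_le_mul g2 ((hMb s hs hst.le).trans (hwC s hs)) (norm_nonneg _) (by positivity)
        _ = C3 / s * ((s:ℝ)^(-r) * (s:ℝ)^r) := by rw [hC3]; ring
        _ = C3 / s := by rw [← Real.rpow_add hs0]; simp
    · intro s hs hst
      try dsimp only
      have e : ∏ k ∈ Finset.Ioc s t, q k = q (s+1) * ∏ k ∈ Finset.Ioc (s+1) t, q k := by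
        rw [← Finset.insert_Ioc_add_one_left_eq_Ioc hst, Finset.prod_insert (by simp)]
      rw [e]
      have := hvrec s hs
      try dsimp only at this
      linarith
  calc ∑ s ∈ Finset.Icc 1 (t - 1), ‖φ t s‖ ≤ ∑ s ∈ Finset.Icc 1 t, ‖φ t s‖ :=
        Finset.sum_le_sum_of_subset_of_nonneg (Finset.Icc_subset_Icc le_rfl (by omega))
          fun _ _ _ => norm_nonneg _
    _ ≤ ∑ s ∈ Finset.Icc 1 t, (C4 * (2 * C3 / m) * (s:ℝ)^(r-1)
          + C5 * ∏ k ∈ Finset.Ioc s t, q k) := by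
        refine Finset.sum_le_sum fun s hs => ?_
        obtain ⟨h1, h2⟩ := Finset.mem_Icc.1 hs
        have := hvC s h1
        have := hφb s h1 h2
        linarith
    _ = C4 * (2 * C3 / m) * ∑ s ∈ Finset.Icc 1 t, (s:ℝ)^(r-1) +
          C5 * ∑ s ∈ Finset.Icc 1 t, ∏ k ∈ Finset.Ioc s t, q k := by
        rw [Finset.sum_add_distrib, Finset.mul_sum, Finset.mul_sum]
    _ ≤ C4 * (2 * C3 / m) * (r⁻¹ * (t:ℝ)^r) + C5 * (C1 * (t:ℝ)^r) := by
        gcongr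
        · exact aux_pow_sum r hr0 hr1 t
        · exact hS t ht
    _ = _ := by ring
end

section
/- Let (ξ_t)_{t≥1} be an ℝ^d-valued martingale-difference sequence with respect to a filtration (F_t) (i.e., ξ_t is F_t-measurable and E[ξ_t | F_{t−1}] = 0), satisfying ‖ξ_t‖ ≤ M almost surely for some constant M > 0. Let r ∈ (1/2, 1), and for each t ≥ 1 and 1 ≤ s ≤ t let φ^t_s be deterministic d×d matrices satisfying ‖φ^t_s‖ ≤ K for all s, t and ∑_{s=1}^{t} ‖φ^t_s‖ ≤ C′ t^r for all t, for some constants K, C′ > 0. Then for every T > 0 and every δ > 0, P( max_{1 ≤ t ≤ ⌊nT⌋} ‖ n^{−1/2} ∑_{i=1}^{t} φ^t_i ξ_i ‖ ≥ δ ) → 0 as n → ∞. -/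
open MeasureTheory Matrix Real Filter
open scoped Matrix.Norms.L2Operator

/-- Matrix-vector multiplication on Euclidean space. -/
noncomputable def mvE {d : ℕ} (A : Matrix (Fin d) (Fin d) ℝ)
    (v : EuclideanSpace ℝ (Fin d)) : EuclideanSpace ℝ (Fin d) :=
  (WithLp.equiv 2 (Fin d → ℝ)).symm (A.mulVec ((WithLp.equiv 2 (Fin d → ℝ)) v))

lemma aux_exp_le (l x c : ℝ) (hx : |x| ≤ c) :
    exp (l * x) ≤ cosh (l * c) + x * (sinh (l * c) / c) := by
  rcases (abs_nonneg x).trans hx |>.eq_or_lt with h | h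
  · subst h
    have : x = 0 := by simpa using hx
    simp [this]
  · have h1 : |x / c| ≤ 1 := by
      rw [abs_div, abs_of_pos h]; exact (div_le_one h).2 hx
    have := Real.exp_mul_le_cosh_add_mul_sinh h1 (l * c)
    have e : x / c * (l * c) = l * x := by field_simp
    rw [e] at this
    calc _ ≤ _ := this
      _ = _ := by ring

lemma aux_mgf {Ω : Type*} {m0 : MeasurableSpace Ω} (μ : Measure Ω)
    [IsProbabilityMeasure μ] (ℱ : Filtration ℕ m0) (X : ℕ → Ω → ℝ) (c : ℕ → ℝ)
    (hX : ∀ t : ℕ, 1 ≤ t → StronglyMeasurable[ℱ t] (X t))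
    (hmd : ∀ t : ℕ, 1 ≤ t → μ[X t | ℱ (t - 1)] =ᵐ[μ] 0)
    (hb : ∀ t : ℕ, 1 ≤ t → ∀ᵐ ω ∂μ, |X t ω| ≤ c t) (l : ℝ) (t : ℕ) :
    StronglyMeasurable[ℱ t] (fun ω => exp (l * ∑ i ∈ Finset.Icc 1 t, X i ω)) ∧
    (∀ᵐ ω ∂μ, ‖exp (l * ∑ i ∈ Finset.Icc 1 t, X i ω)‖ ≤ exp (|l| * ∑ i ∈ Finset.Icc 1 t, c i)) ∧
    ∫ ω, exp (l * ∑ i ∈ Finset.Icc 1 t, X i ω) ∂μ ≤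
      exp (l ^ 2 / 2 * ∑ i ∈ Finset.Icc 1 t, c i ^ 2) := by
  induction t with
  | zero => simp [stronglyMeasurable_const]
  | succ t ih =>
    obtain ⟨h1, h2, h3⟩ := ih
    have hb' := hb (t + 1) (by omega)
    have hX' := hX (t + 1) (by omega)
    have hmd' := hmd (t + 1) (by omega)
    have key : ∀ ω, exp (l * ∑ i ∈ Finset.Icc 1 (t + 1), X i ω) =
        exp (l * ∑ i ∈ Finset.Icc 1 t, X i ω) * exp (l * X (t + 1) ω) := by
      intro ω
      rw [Finset.sum_Icc_succ_top (by omega), mul_add, exp_add]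
    simp only [key]
    set Y : Ω → ℝ := fun ω => exp (l * ∑ i ∈ Finset.Icc 1 t, X i ω) with hY
    have hm1 : StronglyMeasurable[ℱ (t + 1)] (fun ω => Y ω * exp (l * X (t + 1) ω)) := by
      refine (h1.mono (ℱ.mono (Nat.le_succ t))).mul ?_
      exact Real.continuous_exp.comp_stronglyMeasurable (hX'.const_mul l)
    have hbd : ∀ᵐ ω ∂μ, ‖Y ω * exp (l * X (t + 1) ω)‖ ≤
        exp (|l| * ∑ i ∈ Finset.Icc 1 (t + 1), c i) := by
      filter_upwards [h2, hb'] with ω a b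
      rw [Finset.sum_Icc_succ_top (by omega), mul_add, exp_add, norm_mul]
      refine mul_le_mul a ?_ (norm_nonneg _) (exp_pos _).le
      rw [Real.norm_eq_abs, abs_exp, exp_le_exp]
      calc l * X (t + 1) ω ≤ |l * X (t + 1) ω| := le_abs_self _
        _ = |l| * |X (t + 1) ω| := abs_mul _ _
        _ ≤ _ := by gcongr
    refine ⟨hm1, hbd, ?_⟩
    have hYint : Integrable Y μ := Integrable.of_bound (h1.mono (ℱ.le t)).aestronglyMeasurable _ h2
    have hXint : Integrable (X (t + 1)) μ :=
      Integrable.of_bound (hX'.mono (ℱ.le _)).aestronglyMeasurable _ hb'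
    have hYX : Integrable (Y * X (t + 1)) μ :=
      hXint.bdd_mul (h1.mono (ℱ.le t)).aestronglyMeasurable h2
    have hYX2 : Integrable (fun ω => Y ω * X (t + 1) ω) μ := hYX
    have hzero : ∫ ω, Y ω * X (t + 1) ω ∂μ = 0 := by
      have hce : μ[Y * X (t + 1) | ℱ t] =ᵐ[μ] Y * μ[X (t + 1) | ℱ t] :=
        condExp_mul_of_stronglyMeasurable_left h1 hYX hXint
      calc ∫ ω, Y ω * X (t + 1) ω ∂μ = ∫ ω, (μ[Y * X (t + 1) | ℱ t]) ω ∂μ :=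
            (integral_condExp (ℱ.le t)).symm
        _ = ∫ ω, (0 : ℝ) ∂μ := by
            refine integral_congr_ae ?_
            filter_upwards [hce, hmd'] with ω a b
            simp only [Nat.add_sub_cancel] at b
            simp [a, b]
        _ = 0 := by simp
    set C := cosh (l * c (t + 1))
    set D := sinh (l * c (t + 1)) / c (t + 1)
    calc ∫ ω, Y ω * exp (l * X (t + 1) ω) ∂μ
        ≤ ∫ ω, (C * Y ω + D * (Y ω * X (t + 1) ω)) ∂μ := by
          refine integral_mono_ae
            (Integrable.of_bound (hm1.mono (ℱ.le _)).aestronglyMeasurable _ hbd)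
            ((hYint.const_mul _).add (hYX2.const_mul D)) ?_
          filter_upwards [hb'] with ω b
          have := mul_le_mul_of_nonneg_left (aux_exp_le l _ _ b) (exp_pos (l * ∑ i ∈ Finset.Icc 1 t, X i ω)).le
          calc _ ≤ _ := this
            _ = _ := by simp only [hY, C, D]; ring
      _ = C * ∫ ω, Y ω ∂μ := by
          rw [integral_add (hYint.const_mul _) (hYX2.const_mul D), integral_const_mul,
            integral_const_mul, hzero]; ring
      _ ≤ exp ((l * c (t + 1)) ^ 2 / 2) * exp (l ^ 2 / 2 * ∑ i ∈ Finset.Icc 1 t, c i ^ 2) :=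
          mul_le_mul (Real.cosh_le_exp_half_sq _) h3 (integral_nonneg fun _ => (exp_pos _).le)
            (exp_pos _).le
      _ = _ := by
          rw [← exp_add, Finset.sum_Icc_succ_top (by omega)]; congr 1; ring

lemma aux_tail {Ω : Type*} {m0 : MeasurableSpace Ω} (μ : Measure Ω)
    [IsProbabilityMeasure μ] (ℱ : Filtration ℕ m0) (X : ℕ → Ω → ℝ) (c : ℕ → ℝ)
    (hX : ∀ t : ℕ, 1 ≤ t → StronglyMeasurable[ℱ t] (X t))
    (hmd : ∀ t : ℕ, 1 ≤ t → μ[X t | ℱ (t - 1)] =ᵐ[μ] 0)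
    (hb : ∀ t : ℕ, 1 ≤ t → ∀ᵐ ω ∂μ, |X t ω| ≤ c t) (t : ℕ) (V ε : ℝ) (hV : 0 < V)
    (hε : 0 ≤ ε) (hc : ∑ i ∈ Finset.Icc 1 t, c i ^ 2 ≤ V) :
    μ.real {ω | ε ≤ |∑ i ∈ Finset.Icc 1 t, X i ω|} ≤ 2 * exp (-(ε ^ 2 / (2 * V))) := by
  have one : ∀ s : ℝ, s ^ 2 = 1 →
      μ.real {ω | ε ≤ s * ∑ i ∈ Finset.Icc 1 t, X i ω} ≤ exp (-(ε ^ 2 / (2 * V))) := by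
    intro s hs
    obtain ⟨h1, h2, h3⟩ := aux_mgf μ ℱ X c hX hmd hb (ε / V * s) t
    have hint := Integrable.of_bound (h1.mono (ℱ.le t)).aestronglyMeasurable _ h2
    have := ProbabilityTheory.measure_ge_le_exp_mul_mgf (μ := μ)
      (X := fun ω => s * ∑ i ∈ Finset.Icc 1 t, X i ω) (t := ε / V) ε (by positivity)
      (by simpa only [mul_assoc] using hint)
    refine this.trans ?_
    unfold ProbabilityTheory.mgf
    simp only [mul_assoc] at h3 ⊢
    calc _ ≤ exp (-(ε / V) * ε) * exp ((ε / V * s) ^ 2 / 2 * ∑ i ∈ Finset.Icc 1 t, c i ^ 2) := by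
          gcongr
      _ ≤ exp (-(ε / V) * ε) * exp ((ε / V * s) ^ 2 / 2 * V) := by gcongr
      _ = _ := by
          rw [← exp_add, mul_pow, hs]; congr 1; field_simp; ring
  have sub : {ω | ε ≤ |∑ i ∈ Finset.Icc 1 t, X i ω|} ⊆
      {ω | ε ≤ 1 * ∑ i ∈ Finset.Icc 1 t, X i ω} ∪ {ω | ε ≤ (-1) * ∑ i ∈ Finset.Icc 1 t, X i ω} := by
    intro ω h
    simp only [Set.mem_setOf_eq, Set.mem_union] at h ⊢
    rcases le_abs.1 h with h | h
    · left; linarith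
    · right; linarith
  calc _ ≤ _ := measureReal_mono sub
    _ ≤ _ := measureReal_union_le _ _
    _ ≤ _ := by linarith [one 1 (by norm_num), one (-1) (by norm_num)]

noncomputable def auxL {d : ℕ} (A : Matrix (Fin d) (Fin d) ℝ) (j : Fin d) :
    EuclideanSpace ℝ (Fin d) →L[ℝ] ℝ :=
  (EuclideanSpace.proj j).comp (Matrix.toEuclideanCLM (n := Fin d) (𝕜 := ℝ) A)

lemma auxL_apply {d : ℕ} (A : Matrix (Fin d) (Fin d) ℝ) (j : Fin d) (v) :
    auxL A j v = mvE A v j := rfl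

lemma auxL_le {d : ℕ} (A : Matrix (Fin d) (Fin d) ℝ) (j : Fin d) (v) :
    |auxL A j v| ≤ ‖A‖ * ‖v‖ := by
  refine le_trans ?_ (A.l2_opNorm_mulVec v)
  exact PiLp.norm_apply_le (mvE A v) j

lemma aux_coord {d : ℕ} (v : EuclideanSpace ℝ (Fin d)) (δ : ℝ) (hδ : 0 < δ) (h : δ ≤ ‖v‖) :
    ∃ j, δ / (d + 1) ≤ |v j| := by
  by_contra! hc
  have h1 : ‖v‖ ≤ ∑ j, |v j| := by
    rw [EuclideanSpace.norm_eq, Real.sqrt_le_left (Finset.sum_nonneg fun _ _ => abs_nonneg _)]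
    exact Finset.sum_sq_le_sq_sum_of_nonneg (fun _ _ => abs_nonneg _)
  have h2 : ∑ j, |v j| ≤ ∑ j : Fin d, δ / (d + 1) := Finset.sum_le_sum fun j _ => (hc j).le
  simp only [Finset.sum_const, Finset.card_univ, Fintype.card_fin, nsmul_eq_mul] at h2
  have h3 : (d : ℝ) * (δ / (d + 1)) < δ := by
    rw [mul_div_assoc', div_lt_iff₀ (by positivity)]; nlinarith
  linarith

lemma aux_lim (r a b : ℝ) (hr1 : r < 1) (hb : 0 < b) :
    Tendsto (fun n : ℕ => a * ((n : ℝ) * exp (-b * (n : ℝ) ^ (1 - r)))) atTop (nhds 0) := by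
  have h := (tendsto_rpow_mul_exp_neg_mul_atTop_nhds_zero (1 / (1 - r)) b hb).comp
    ((tendsto_rpow_atTop (y := 1 - r) (by linarith)).comp tendsto_natCast_atTop_atTop)
  have h2 := h.const_mul a
  rw [mul_zero] at h2
  refine h2.congr fun n => ?_
  have : (1 - r) ≠ 0 := by linarith
  simp only [Function.comp]
  rw [← Real.rpow_mul (Nat.cast_nonneg n), mul_one_div_cancel this, Real.rpow_one]

/-- maximal inequality consequence for weighted sums of a bounded
martingale-difference sequence: for deterministic matrices `φ^t_s` with `‖φ^t_s‖ ≤ K` and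
`∑_{s=1}^t ‖φ^t_s‖ ≤ C′ t^r`,
`P( max_{1 ≤ t ≤ ⌊nT⌋} ‖ n^{−1/2} ∑_{i=1}^t φ^t_i ξ_i ‖ ≥ δ ) → 0` as `n → ∞`. -/
theorem stmt_5 (d : ℕ) {Ω : Type*} {m0 : MeasurableSpace Ω} (μ : Measure Ω)
    [IsProbabilityMeasure μ] (ℱ : Filtration ℕ m0)
    (ξ : ℕ → Ω → EuclideanSpace ℝ (Fin d))
    (hadapt : ∀ t : ℕ, 1 ≤ t → StronglyMeasurable[ℱ t] (ξ t))
    (hmd : ∀ t : ℕ, 1 ≤ t → μ[ξ t | ℱ (t - 1)] =ᵐ[μ] 0)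
    (M : ℝ) (hMpos : 0 < M) (hbdd : ∀ t : ℕ, 1 ≤ t → ∀ᵐ ω ∂μ, ‖ξ t ω‖ ≤ M)
    (r : ℝ) (hr : 1/2 < r) (hr1 : r < 1)
    (φ : ℕ → ℕ → Matrix (Fin d) (Fin d) ℝ)
    (K C' : ℝ) (hK : 0 < K) (hC' : 0 < C')
    (hφK : ∀ t s : ℕ, ‖φ t s‖ ≤ K)
    (hφsum : ∀ t : ℕ, 1 ≤ t → ∑ s ∈ Finset.Icc 1 t, ‖φ t s‖ ≤ C' * (t : ℝ) ^ r) :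
    ∀ T : ℝ, 0 < T → ∀ δ : ℝ, 0 < δ →
      Tendsto (fun n : ℕ =>
          μ {ω | ∃ t ∈ Finset.Icc 1 ⌊(n : ℝ) * T⌋₊,
              δ ≤ ‖((n : ℝ) ^ (-(1/2) : ℝ)) •
                ∑ i ∈ Finset.Icc 1 t, mvE (φ t i) (ξ i ω)‖})
        atTop (nhds 0) := by
  intro T hT δ hδ
  set B : ℝ := M ^ 2 * K * C' with hB
  have hBpos : 0 < B := by positivity
  set b : ℝ := (δ / (d + 1)) ^ 2 / (2 * (B * T ^ r)) with hb
  have hbpos : 0 < b := by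
    have := Real.rpow_pos_of_pos hT r
    positivity
  have hmain : ∀ n : ℕ, 1 ≤ n → μ.real {ω | ∃ t ∈ Finset.Icc 1 ⌊(n : ℝ) * T⌋₊,
              δ ≤ ‖((n : ℝ) ^ (-(1/2) : ℝ)) •
                ∑ i ∈ Finset.Icc 1 t, mvE (φ t i) (ξ i ω)‖} ≤
      (2 * d * T) * ((n : ℝ) * exp (-b * (n : ℝ) ^ (1 - r))) := by
    intro n hn
    have hn0 : (0 : ℝ) < n := by exact_mod_cast hn
    set ε : ℝ := (n : ℝ) ^ (1 / 2 : ℝ) * (δ / (d + 1)) with hε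
    have hεpos : 0 < ε := by positivity
    have hε2 : ε ^ 2 = n * (δ / (d + 1)) ^ 2 := by
      rw [hε, mul_pow, ← Real.rpow_natCast, ← Real.rpow_mul hn0.le]; norm_num
    have hsub : {ω | ∃ t ∈ Finset.Icc 1 ⌊(n : ℝ) * T⌋₊,
              δ ≤ ‖((n : ℝ) ^ (-(1/2) : ℝ)) •
                ∑ i ∈ Finset.Icc 1 t, mvE (φ t i) (ξ i ω)‖} ⊆
        ⋃ p ∈ (Finset.Icc 1 ⌊(n : ℝ) * T⌋₊) ×ˢ (Finset.univ : Finset (Fin d)),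
          {ω | ε ≤ |∑ i ∈ Finset.Icc 1 p.1, auxL (φ p.1 i) p.2 (ξ i ω)|} := by
      rintro ω ⟨t, ht, h⟩
      obtain ⟨j, hj⟩ := aux_coord _ δ hδ h
      simp only [Set.mem_iUnion]
      refine ⟨(t, j), by simpa using ht, ?_⟩
      simp only [Set.mem_setOf_eq, auxL_apply]
      have e : (((n : ℝ) ^ (-(1/2) : ℝ)) • ∑ i ∈ Finset.Icc 1 t, mvE (φ t i) (ξ i ω)) j =
          (n : ℝ) ^ (-(1/2) : ℝ) * ∑ i ∈ Finset.Icc 1 t, mvE (φ t i) (ξ i ω) j := by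
        simp
      rw [e, abs_mul, abs_of_pos (Real.rpow_pos_of_pos hn0 _), Real.rpow_neg hn0.le,
        inv_mul_eq_div, le_div_iff₀ (Real.rpow_pos_of_pos hn0 _)] at hj
      rw [hε]; linarith
    have hterm : ∀ p ∈ (Finset.Icc 1 ⌊(n : ℝ) * T⌋₊) ×ˢ (Finset.univ : Finset (Fin d)),
        μ.real {ω | ε ≤ |∑ i ∈ Finset.Icc 1 p.1, auxL (φ p.1 i) p.2 (ξ i ω)|} ≤
          2 * exp (-b * (n : ℝ) ^ (1 - r)) := by
      rintro ⟨t, j⟩ hp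
      simp only [Finset.mem_product, Finset.mem_Icc, Finset.mem_univ, and_true] at hp
      have htT : (t : ℝ) ≤ n * T := (Nat.le_floor_iff (by positivity)).1 hp.2
      have hV : (0 : ℝ) < B * (n * T) ^ r := by
        have := Real.rpow_pos_of_pos (mul_pos hn0 hT) r
        positivity
      have := aux_tail μ ℱ (fun i ω => auxL (φ t i) j (ξ i ω)) (fun i => ‖φ t i‖ * M)
        (fun i hi => (auxL (φ t i) j).continuous.comp_stronglyMeasurable (hadapt i hi))
        (fun i hi => by
          have hint : Integrable (ξ i) μ :=
            Integrable.of_bound ((hadapt i hi).mono (ℱ.le _)).aestronglyMeasurable _ (hbdd i hi)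
          have h1 := (auxL (φ t i) j).comp_condExp_comm (m := ℱ (i - 1)) hint
          refine h1.symm.trans ?_
          filter_upwards [hmd i hi] with ω h
          simp [h])
        (fun i hi => by
          filter_upwards [hbdd i hi] with ω h
          exact (auxL_le _ _ _).trans (by gcongr))
        t (B * (n * T) ^ r) ε hV hεpos.le (by
          calc ∑ i ∈ Finset.Icc 1 t, (‖φ t i‖ * M) ^ 2
              ≤ ∑ i ∈ Finset.Icc 1 t, (M ^ 2 * K) * ‖φ t i‖ := by
                refine Finset.sum_le_sum fun i _ => ?_
                have h1 := mul_le_mul_of_nonneg_right (hφK t i) (norm_nonneg (φ t i))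
                have := mul_le_mul_of_nonneg_left h1 (sq_nonneg M)
                linarith
            _ = (M ^ 2 * K) * ∑ i ∈ Finset.Icc 1 t, ‖φ t i‖ := by rw [Finset.mul_sum]
            _ ≤ (M ^ 2 * K) * (C' * (t : ℝ) ^ r) := by
                gcongr; exact hφsum t hp.1
            _ = B * (t : ℝ) ^ r := by rw [hB]; ring
            _ ≤ B * (n * T) ^ r := by gcongr)
      refine this.trans (le_of_eq ?_)
      congr 2
      rw [hε2, Real.mul_rpow hn0.le hT.le, Real.rpow_sub hn0, Real.rpow_one, hb]
      have h1 := (Real.rpow_pos_of_pos hT r).ne'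
      have h2 := (Real.rpow_pos_of_pos hn0 r).ne'
      field_simp
    calc _ ≤ _ := measureReal_mono hsub (measure_ne_top _ _)
      _ ≤ _ := measureReal_biUnion_finset_le _ _
      _ ≤ _ := Finset.sum_le_sum hterm
      _ = (⌊(n : ℝ) * T⌋₊ : ℝ) * (d * (2 * exp (-b * (n : ℝ) ^ (1 - r)))) := by
          simp [Finset.card_product, mul_assoc]
      _ ≤ (n * T) * (d * (2 * exp (-b * (n : ℝ) ^ (1 - r)))) := by
          gcongr; exact Nat.floor_le (by positivity)
      _ = _ := by ring
  rw [← ENNReal.tendsto_toReal_iff (fun _ => measure_ne_top _ _) (by simp)]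
  refine squeeze_zero' (Eventually.of_forall fun _ => ENNReal.toReal_nonneg) ?_
    (aux_lim r (2 * d * T) b hr1 hbpos)
  filter_upwards [eventually_ge_atTop 1] with n hn
  exact hmain n hn
end

section
/- Let w_1, …, w_m > 0 with ∑_{i=1}^m w_i = 1, let u_1, …, u_m ∈ ℝ^d be arbitrary vectors, and set s = ∑_{j=1}^m u_j. Let N be the d×m matrix whose i-th column is u_i/√(w_i), and for i = 1, …, m let r_i ∈ ℝ^m be the vector with i-th entry 1/√(w_i) − √(w_i) and j-th entry −√(w_j) for j ≠ i. Then ∑_{i=1}^m (u_i/w_i − s)(u_i/w_i − s)^T = N (∑_{i=1}^m r_i r_i^T) N^T, and the m×m matrix V := ∑_{i=1}^m r_i r_i^T has entries V_{ii} = 1/w_i − 2 + m·w_i and V_{ij} = −√(w_i/w_j) − √(w_j/w_i) + m√(w_i w_j) for i ≠ j. -/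
open Finset Matrix Real

/-- the batch means quadratic form identity
`∑ᵢ (uᵢ/wᵢ − s)(uᵢ/wᵢ − s)ᵀ = N V Nᵀ` with `V = ∑ᵢ rᵢ rᵢᵀ`, together with the explicit
entries of `V`. -/
theorem stmt_8 (d m : ℕ) (w : Fin m → ℝ) (hw : ∀ i, 0 < w i) (hw1 : ∑ i, w i = 1)
    (u : Fin m → (Fin d → ℝ)) (s : Fin d → ℝ) (hs : s = ∑ j, u j)
    (N : Matrix (Fin d) (Fin m) ℝ) (hN : ∀ a i, N a i = u i a / Real.sqrt (w i))
    (r : Fin m → (Fin m → ℝ))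
    (hr : ∀ i j, r i j = if j = i then 1 / Real.sqrt (w i) - Real.sqrt (w i)
      else -Real.sqrt (w j))
    (V : Matrix (Fin m) (Fin m) ℝ) (hV : V = ∑ i, Matrix.vecMulVec (r i) (r i)) :
    (∑ i, Matrix.vecMulVec ((w i)⁻¹ • u i - s) ((w i)⁻¹ • u i - s) = N * V * Nᵀ) ∧
    (∀ i, V i i = 1 / w i - 2 + m * w i) ∧
    (∀ i j, i ≠ j →
      V i j = -Real.sqrt (w i / w j) - Real.sqrt (w j / w i) + m * Real.sqrt (w i * w j)) := by
  have hp : ∀ i, 0 < √(w i) := fun i => Real.sqrt_pos.2 (hw i)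
  have hsq : ∀ i, √(w i) * √(w i) = w i := fun i => Real.mul_self_sqrt (hw i).le
  have hr' : ∀ i j, r i j = (if j = i then 1 / √(w j) else 0) - √(w j) := by
    intro i j
    rw [hr]
    split_ifs with h
    · rw [h]
    · ring
  have hNr : ∀ i, N *ᵥ (r i) = (w i)⁻¹ • u i - s := by
    intro i
    ext a
    simp only [Matrix.mulVec, dotProduct, hN, hr', hs, mul_sub, Finset.sum_sub_distrib,
      mul_ite, mul_zero, Finset.sum_ite_eq', Finset.sum_ite_eq, Finset.mem_univ, if_true,
      Pi.sub_apply, Pi.smul_apply, smul_eq_mul, Finset.sum_apply]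
    congr 1
    · rw [div_mul_div_comm, hsq, mul_one, div_eq_inv_mul]
    · exact Finset.sum_congr rfl fun j _ => div_mul_cancel₀ _ (hp j).ne'
  have hVe : ∀ a b, V a b = (if a = b then 1 / √(w a) * (1 / √(w b)) else 0)
      - 1 / √(w a) * √(w b) - √(w a) * (1 / √(w b)) + m * (√(w a) * √(w b)) := by
    intro a b
    simp only [hV, Matrix.sum_apply, Matrix.vecMulVec_apply, hr', mul_sub, sub_mul,
      Finset.sum_sub_distrib, mul_ite, ite_mul, mul_zero, zero_mul, Finset.sum_ite_eq,
      Finset.mem_univ, if_true, Finset.sum_const, Finset.card_univ, Fintype.card_fin,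
      nsmul_eq_mul]
    by_cases h : a = b
    · subst h
      simp
      ring
    · have h' : b ≠ a := fun e => h e.symm
      simp [h, h']
      ring
  refine ⟨?_, ?_, ?_⟩
  · rw [hV, Matrix.mul_sum, Matrix.sum_mul]
    refine Finset.sum_congr rfl fun i _ => ?_
    rw [Matrix.mul_vecMulVec, Matrix.vecMulVec_mul, Matrix.vecMul_transpose, hNr]
  · intro i
    rw [hVe, if_pos rfl, div_mul_div_comm, hsq, one_div_mul_cancel (hp i).ne',
      mul_one_div_cancel (hp i).ne']
    ring
  · intro i j hij
    rw [hVe, if_neg hij, Real.sqrt_div (hw i).le, Real.sqrt_div (hw j).le,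
      Real.sqrt_mul (hw i).le]
    ring
end

section
/- Let w_1, …, w_m > 0 with ∑_{i=1}^m w_i = 1, and let V be the m×m symmetric matrix with V_{ii} = 1/w_i − 2 + m·w_i and V_{ij} = −√(w_i/w_j) − √(w_j/w_i) + m√(w_i w_j) for i ≠ j. Then V is positive semidefinite and has rank exactly m − 1; in particular, the upper-left (m−1)×(m−1) submatrix of V is positive definite. -/
open Finset Matrix Real

/-- the batch-means matrix `V` is positive semidefinite of rank exactly
`m − 1`, and its upper-left `(m−1)×(m−1)` submatrix is positive definite. -/
theorem stmt_10 (m : ℕ) (w : Fin m → ℝ) (hw : ∀ i, 0 < w i) (hw1 : ∑ i, w i = 1)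
    (V : Matrix (Fin m) (Fin m) ℝ)
    (hV : ∀ i j, V i j = if i = j then 1 / w i - 2 + m * w i
      else -Real.sqrt (w i / w j) - Real.sqrt (w j / w i) + m * Real.sqrt (w i * w j)) :
    V.PosSemidef ∧ V.rank = m - 1 ∧
      (V.submatrix (Fin.castLE (Nat.sub_le m 1)) (Fin.castLE (Nat.sub_le m 1))).PosDef := by
  have hm : 0 < m := by
    rcases Nat.eq_zero_or_pos m with h | h
    · subst h; simp at hw1
    · exact h
  obtain ⟨s, hs⟩ : ∃ s : Fin m → ℝ, ∀ i, s i = √(w i) := ⟨_, fun _ => rfl⟩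
  have hs0 : ∀ i, 0 < s i := fun i => by rw [hs]; exact Real.sqrt_pos.2 (hw i)
  have hsw : ∀ i, w i = s i * s i := fun i => by rw [hs, Real.mul_self_sqrt (hw i).le]
  obtain ⟨B, hB⟩ : ∃ B : Matrix (Fin m) (Fin m) ℝ,
      ∀ k i, B k i = (if k = i then 1 / s i else 0) - s i := ⟨Matrix.of _, fun _ _ => rfl⟩
  have hVB : V = Bᴴ * B := by
    ext i j
    have hi := (hs0 i).ne'
    have hj := (hs0 j).ne'
    have key : (Bᴴ * B) i j
        = (if i = j then 1 / s i * (1 / s j) else 0) - s j / s i - s i / s j + m * (s i * s j) := by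
      simp only [Matrix.mul_apply, Matrix.conjTranspose_apply, hB, star_trivial, sub_mul, mul_sub,
        Finset.sum_sub_distrib, ite_mul, mul_ite, zero_mul, mul_zero, Finset.sum_ite_eq',
        Finset.mem_univ, if_true, Finset.sum_const, Finset.card_univ, Fintype.card_fin, nsmul_eq_mul]
      simp only [eq_comm (a := j) (b := i)]
      ring
    rw [key, hV]
    by_cases h : i = j
    · subst h
      simp only [if_true]
      rw [hsw]
      field_simp
      ring
    · simp only [h, if_false]
      rw [Real.sqrt_div (hw i).le, Real.sqrt_div (hw j).le, Real.sqrt_mul (hw i).le, ← hs, ← hs]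
      ring
  have hBx : ∀ x k, (B *ᵥ x) k = x k / s k - ∑ i, s i * x i := by
    intro x k
    simp only [Matrix.mulVec, dotProduct, hB, sub_mul, Finset.sum_sub_distrib, ite_mul, zero_mul,
      Finset.sum_ite_eq, Finset.mem_univ, if_true]
    ring
  refine ⟨hVB ▸ Matrix.posSemidef_conjTranspose_mul_self B, ?_, ?_⟩
  · rw [hVB, Matrix.rank_conjTranspose_mul_self]
    have hker : LinearMap.ker B.mulVecLin = Submodule.span ℝ {s} := by
      ext x
      rw [LinearMap.mem_ker, Submodule.mem_span_singleton, Matrix.mulVecLin_apply]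
      constructor
      · intro h
        refine ⟨∑ i, s i * x i, ?_⟩
        ext k
        have := congrFun h k
        rw [hBx, Pi.zero_apply, sub_eq_zero, div_eq_iff (hs0 k).ne'] at this
        simp [this]
      · rintro ⟨c, rfl⟩
        ext k
        rw [hBx]
        have : ∑ i, s i * (c • s) i = c := by
          trans c * ∑ i, w i
          swap
          · rw [hw1, mul_one]
          rw [Finset.mul_sum]
          refine Finset.sum_congr rfl fun i _ => ?_
          rw [hsw i, Pi.smul_apply, smul_eq_mul]; ring
        rw [this]
        have := (hs0 k).ne'
        simp [this]
    have h1 := LinearMap.finrank_range_add_finrank_ker B.mulVecLin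
    rw [hker, finrank_span_singleton (fun h => (hs0 ⟨0, hm⟩).ne' (congrFun h _))] at h1
    simp only [Module.finrank_fin_fun] at h1
    unfold Matrix.rank
    omega
  · set e := Fin.castLE (Nat.sub_le m 1)
    have hsub : V.submatrix e e = (B.submatrix id e)ᴴ * (B.submatrix id e) := by
      rw [hVB]; rfl
    rw [hsub]
    refine Matrix.PosDef.conjTranspose_mul_self _ ?_
    have he : Function.Injective e := Fin.castLE_injective _
    have hmv : ∀ y k, ((B.submatrix id e) *ᵥ y) k
        = (∑ j, if k = e j then y j / s k else 0) - ∑ j, s (e j) * y j := by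
      intro y k
      simp only [Matrix.mulVec, dotProduct, Matrix.submatrix_apply, hB, sub_mul,
        Finset.sum_sub_distrib, id]
      congr 1
      refine Finset.sum_congr rfl fun j _ => ?_
      split_ifs with h
      · rw [h]; ring
      · simp
    rw [← Matrix.coe_mulVecLin, ← LinearMap.ker_eq_bot, LinearMap.ker_eq_bot']
    intro y hy
    rw [Matrix.mulVecLin_apply] at hy
    have hc : ∑ j, s (e j) * y j = 0 := by
      have h := congrFun hy ⟨m - 1, by omega⟩
      rw [hmv, Finset.sum_eq_zero] at h
      · simpa using h
      · intro j _
        rw [if_neg]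
        intro h
        have := congrArg Fin.val h
        simp [e] at this
        omega
    ext j
    have h := congrFun hy (e j)
    rw [hmv, hc] at h
    simp only [he.eq_iff, Finset.sum_ite_eq, Finset.mem_univ, if_true, sub_zero, Pi.zero_apply,
      div_eq_zero_iff, (hs0 (e j)).ne', or_false] at h
    simpa using h
end

section
/- Let m ≥ d + 1, let V be an m×m real symmetric positive semidefinite matrix of rank m − 1, and let N be a random d×m matrix whose dm entries are independent and identically distributed standard normal (N(0,1)) random variables. Then the random d×d matrix N V N^T is positive definite almost surely. -/
open Matrix MeasureTheory ProbabilityTheory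

lemma mvpoly_ae_ne_zero (ν : Measure ℝ) [IsProbabilityMeasure ν] [NullSingletonClass ν] (n : ℕ) :
    ∀ p : MvPolynomial (Fin n) ℝ, p ≠ 0 →
      ∀ᵐ x ∂(Measure.pi fun _ : Fin n => ν), MvPolynomial.eval x p ≠ 0 := by
  induction n with
  | zero =>
    intro p hp
    refine Filter.Eventually.of_forall fun x hx => hp ?_
    rw [MvPolynomial.eq_C_of_isEmpty p] at hx ⊢
    rw [MvPolynomial.eval_C] at hx
    rw [hx, map_zero]
  | succ n ih =>
    intro p hp
    have hq : MvPolynomial.finSuccEquiv ℝ n p ≠ 0 := by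
      simpa using hp
    have hlc := ih _ (Polynomial.leadingCoeff_ne_zero.mpr hq)
    have hcont : Continuous fun z : ℝ × (Fin n → ℝ) =>
        MvPolynomial.eval (Fin.cons z.1 z.2 : Fin (n + 1) → ℝ) p := by
      refine (MvPolynomial.continuous_eval p).comp ?_
      refine continuous_pi fun i => ?_
      refine Fin.cases ?_ (fun j => ?_) i
      · simpa using continuous_fst
      · simp only [Fin.cons_succ]
        fun_prop
    have hms : MeasurableSet {z : ℝ × (Fin n → ℝ) |
        MvPolynomial.eval (Fin.cons z.1 z.2 : Fin (n + 1) → ℝ) p ≠ 0} :=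
      (hcont.measurable (measurableSet_singleton 0)).compl
    have hprod : ∀ᵐ z ∂(ν.prod (Measure.pi fun _ : Fin n => ν)),
        MvPolynomial.eval (Fin.cons z.1 z.2 : Fin (n + 1) → ℝ) p ≠ 0 := by
      rw [Measure.ae_prod_iff_ae_ae hms, Measure.ae_ae_comm hms]
      filter_upwards [hlc] with y hy
      have hne : Polynomial.map (MvPolynomial.eval y) (MvPolynomial.finSuccEquiv ℝ n p) ≠ 0 := by
        intro h
        apply hy
        have := congrArg (fun r => Polynomial.coeff r
          (MvPolynomial.finSuccEquiv ℝ n p).natDegree) h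
        simpa [Polynomial.coeff_map] using this
      have hfin := Polynomial.finite_setOfPred_isRoot hne
      have h0 := hfin.measure_zero ν
      rw [ae_iff]
      refine measure_mono_null (fun t ht => ?_) h0
      simp only [Set.mem_ofPred_eq, not_not] at ht
      rw [MvPolynomial.eval_eq_eval_mv_eval'] at ht
      exact ht
    have hmp := measurePreserving_piFinSuccAbove (fun _ : Fin (n + 1) => ν) 0
    have := hmp.quasiMeasurePreserving.ae hprod
    filter_upwards [this] with x hx
    have hx' : (Fin.cons (MeasurableEquiv.piFinSuccAbove (fun _ : Fin (n + 1) => ℝ) 0 x).1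
        (MeasurableEquiv.piFinSuccAbove (fun _ : Fin (n + 1) => ℝ) 0 x).2 : Fin (n + 1) → ℝ) = x := by
      funext i
      refine Fin.cases ?_ (fun j => ?_) i <;> rfl
    rwa [hx'] at hx

lemma exists_det_ne_zero (d m : ℕ) (hdm : d + 1 ≤ m)
    (V : Matrix (Fin m) (Fin m) ℝ) (hV : V.PosSemidef) (hVrank : V.rank = m - 1) :
    ∃ M : Matrix (Fin d) (Fin m) ℝ, (M * V * Mᵀ).det ≠ 0 := by
  have hH := hV.isHermitian
  have hcard : Fintype.card (Fin d) ≤ Fintype.card {i // hH.eigenvalues i ≠ 0} := by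
    rw [← hH.rank_eq_card_non_zero_eigs, hVrank, Fintype.card_fin]
    omega
  obtain ⟨f⟩ := Function.Embedding.nonempty_of_card_le hcard
  refine ⟨Matrix.of fun i j => hH.eigenvectorBasis (f i) j, ?_⟩
  have : (Matrix.of fun i j => hH.eigenvectorBasis (f i) j) * V *
      (Matrix.of fun i j => hH.eigenvectorBasis (f i) j)ᵀ =
      Matrix.diagonal fun i : Fin d => hH.eigenvalues (f i) := by
    ext i j
    have h1 := hH.mulVec_eigenvectorBasis (f j)
    have h2 := (orthonormal_iff_ite.mp hH.eigenvectorBasis.orthonormal) (f i) (f j)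
    rw [Matrix.mul_assoc]
    have h3 : ∀ k, (V * (Matrix.of fun i j => hH.eigenvectorBasis (f i) j)ᵀ) k j =
        hH.eigenvalues (f j) * hH.eigenvectorBasis (f j) k := fun k => by
      have := congrFun h1 k
      simpa [Matrix.mulVec, dotProduct, Matrix.mul_apply] using this
    rw [Matrix.mul_apply]
    simp only [h3, Matrix.of_apply]
    have h4 : ∑ k, hH.eigenvectorBasis (f i) k * (hH.eigenvalues (f j) * hH.eigenvectorBasis (f j) k)
        = hH.eigenvalues (f j) *
          inner ℝ (hH.eigenvectorBasis (f i)) (hH.eigenvectorBasis (f j)) := by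
      rw [PiLp.inner_apply, Finset.mul_sum]
      refine Finset.sum_congr rfl fun k _ => ?_
      simp
      ring
    rw [h4, h2]
    by_cases hij : i = j
    · subst hij; simp
    · have : (f i : Fin m) ≠ f j := fun h => hij (f.injective (Subtype.ext h))
      simp [hij, this]
  rw [this, Matrix.det_diagonal]
  exact Finset.prod_ne_zero_iff.mpr fun i _ => (f i).2

/-- if `m ≥ d + 1`, `V` is an `m × m` real symmetric positive semidefinite
matrix of rank `m − 1`, and `N` is a random `d × m` matrix with i.i.d. standard normal
entries, then `N V Nᵀ` is positive definite almost surely. -/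
theorem stmt_13 (d m : ℕ) (hd : 0 < d) (hdm : d + 1 ≤ m)
    (V : Matrix (Fin m) (Fin m) ℝ) (hV : V.PosSemidef) (hVrank : V.rank = m - 1)
    {Ω : Type*} [MeasurableSpace Ω] (μ : Measure Ω) [IsProbabilityMeasure μ]
    (N : Ω → Matrix (Fin d) (Fin m) ℝ)
    (hmeas : ∀ p : Fin d × Fin m, Measurable fun ω => N ω p.1 p.2)
    (hindep : iIndepFun
      (fun (p : Fin d × Fin m) ω => N ω p.1 p.2) μ)
    (hgauss : ∀ p : Fin d × Fin m,
      Measure.map (fun ω => N ω p.1 p.2) μ = gaussianReal 0 1) :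
    ∀ᵐ ω ∂μ, ((N ω) * V * (N ω)ᵀ).PosDef := by
  obtain ⟨M, hM⟩ := exists_det_ne_zero d m hdm V hV hVrank
  let e := Fintype.equivFin (Fin d × Fin m)
  let A : Matrix (Fin d) (Fin m) (MvPolynomial (Fin (Fintype.card (Fin d × Fin m))) ℝ) :=
    Matrix.of fun i j => MvPolynomial.X (e (i, j))
  let W : Matrix (Fin m) (Fin m) (MvPolynomial (Fin (Fintype.card (Fin d × Fin m))) ℝ) :=
    Matrix.of fun i j => MvPolynomial.C (V i j)
  let P : MvPolynomial (Fin (Fintype.card (Fin d × Fin m))) ℝ := (A * W * Aᵀ).det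
  have heval : ∀ B : Matrix (Fin d) (Fin m) ℝ,
      MvPolynomial.eval (fun k => B (e.symm k).1 (e.symm k).2) P = (B * V * Bᵀ).det := by
    intro B
    simp only [P]
    rw [RingHom.map_det]
    congr 1
    ext i j
    simp [A, W, Matrix.mul_apply]
  have hP : P ≠ 0 := fun h => hM (by rw [← heval, h, map_zero])
  haveI : NullSingletonClass (gaussianReal 0 1) := nullSingletonClass_gaussianReal one_ne_zero
  have hae := mvpoly_ae_ne_zero (gaussianReal 0 1) _ P hP
  have hind := hindep.precomp e.symm.injective
  have hmap := (iIndepFun_iff_map_fun_eq_pi_map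
    (fun k => (hmeas (e.symm k)).aemeasurable)).mp hind
  simp only [hgauss] at hmap
  rw [← hmap] at hae
  have hae' := ae_of_ae_map
    (measurable_pi_lambda _ fun k => hmeas (e.symm k)).aemeasurable hae
  filter_upwards [hae'] with ω hω
  have hps : ((N ω) * V * (N ω)ᵀ).PosSemidef := by
    simpa using hV.mul_mul_conjTranspose_same (N ω)
  rw [hps.posDef_iff_det_ne_zero, ← heval]
  exact hω
end

section
/- Let B be a standard d-dimensional Brownian motion on [0,1], let m be a positive integer, and let 0 = c_0 < c_1 < ⋯ < c_m = 1 with w_i = c_i − c_{i−1} > 0. If m ≥ d + 1, then the random d×d matrix g_m(B, w) is positive definite with probability 1; if m ≤ d, then g_m(B, w) is singular (degenerate) with probability 1. -/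
open MeasureTheory ProbabilityTheory Matrix Finset

/-- `B` is a standard `d`-dimensional Brownian motion on `[0,1]` under `μ`:
it starts at `0`, has continuous paths, independent increments, and Gaussian increments
`B t − B s ∼ N(0, (t−s) I)` (i.e. `d` independent one-dimensional standard Brownian
coordinates). -/
def IsStdBM (d : ℕ) {Ω : Type*} [MeasurableSpace Ω] (μ : Measure Ω)
    (B : ℝ → Ω → (Fin d → ℝ)) : Prop :=
  (∀ ω, B 0 ω = 0) ∧
  (∀ ω, ContinuousOn (fun t => B t ω) (Set.Icc 0 1)) ∧
  (∀ t ∈ Set.Icc (0 : ℝ) 1, Measurable (B t)) ∧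
  (∀ (n : ℕ) (t : ℕ → ℝ), Monotone t → (∀ i, t i ∈ Set.Icc (0 : ℝ) 1) →
    iIndepFun
      (fun i : Fin n => fun ω => B (t (i + 1)) ω - B (t i) ω) μ) ∧
  (∀ s t : ℝ, 0 ≤ s → s ≤ t → t ≤ 1 →
    Measure.map (fun ω => B t ω - B s ω) μ =
      Measure.pi fun _ : Fin d => gaussianReal 0 (Real.toNNReal (t - s)))

/-- The batch-means functional `g_m(x, w)` associated to breakpoints
`0 = c_0 < c_1 < ⋯ < c_m = 1` (with `w_i = c_i − c_{i−1}`). -/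
noncomputable def gm (d m : ℕ) (x : ℝ → (Fin d → ℝ)) (c : ℕ → ℝ) :
    Matrix (Fin d) (Fin d) ℝ :=
  ((m : ℝ) - 1)⁻¹ •
    ∑ i ∈ Finset.Icc 1 m,
      Matrix.vecMulVec
        ((c i - c (i - 1))⁻¹ • (x (c i) - x (c (i - 1))) - x 1)
        ((c i - c (i - 1))⁻¹ • (x (c i) - x (c (i - 1))) - x 1)

lemma aux_swap_null {α β : Type*} [MeasurableSpace α] [MeasurableSpace β] (μ : Measure α)
    (ν : Measure β) [SFinite μ] [SFinite ν] (p : α × β → Prop) (hp : MeasurableSet {x | p x})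
    (h : ∀ᵐ y ∂ν, ∀ᵐ x ∂μ, p (x, y)) : ∀ᵐ z ∂μ.prod ν, p z := by
  rw [Measure.ae_prod_iff_ae_ae hp]
  exact (Measure.ae_ae_comm (p := fun y x => p (x, y)) (hp.preimage measurable_swap)).1 h

lemma aux_hyper (n : ℕ) (ν : Fin (n+1) → Measure ℝ) [∀ i, IsProbabilityMeasure (ν i)]
    [∀ i, NullSingletonClass (ν i)] (a : Fin (n+1) → ℝ) (b : ℝ) (ha : a ≠ 0) :
    ∀ᵐ x ∂(Measure.pi ν), a ⬝ᵥ x + b ≠ 0 := by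
  obtain ⟨j, hj⟩ := Function.ne_iff.1 ha
  have hmp := measurePreserving_piFinSuccAbove ν j
  have key : ∀ᵐ z ∂((ν j).prod (Measure.pi fun k => ν (j.succAbove k))),
      a j * z.1 + ((fun k => a (j.succAbove k)) ⬝ᵥ z.2 + b) ≠ 0 := by
    apply aux_swap_null
    · have : Measurable fun z : ℝ × (Fin n → ℝ) =>
          a j * z.1 + ((fun k => a (j.succAbove k)) ⬝ᵥ z.2 + b) := by
        unfold dotProduct; fun_prop
      exact (this (measurableSet_singleton 0)).compl
    · refine Filter.Eventually.of_forall fun y => ?_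
      have h0 : (ν j) {-((fun k => a (j.succAbove k)) ⬝ᵥ y + b) / a j} = 0 := measure_singleton _
      refine measure_mono_null ?_ h0
      intro x hx
      simp only [Set.mem_compl_iff, Set.mem_ofPred_eq, not_not, ne_eq] at hx
      rw [Set.mem_singleton_iff, eq_div_iff hj]
      linarith
  filter_upwards [hmp.quasiMeasurePreserving.ae key] with x hx
  intro h
  apply hx
  rw [← h]
  simp only [dotProduct, MeasurableEquiv.piFinSuccAbove_apply, Fin.insertNthEquiv_symm_apply,
    Fin.removeNth_apply, Fin.sum_univ_succAbove _ j]
  ring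

lemma aux_det (n : ℕ) : ∀ (ν : Fin n → Measure (Fin n → ℝ)) [∀ i, IsProbabilityMeasure (ν i)]
    (_ : ∀ i, ∀ a : Fin n → ℝ, a ≠ 0 → ∀ᵐ x ∂(ν i), a ⬝ᵥ x ≠ 0),
    ∀ᵐ x ∂(Measure.pi ν), (Matrix.of x).det ≠ 0 := by
  induction n with
  | zero => intro ν _ _; simp
  | succ n ih =>
    intro ν _ hν
    have hmp := measurePreserving_piFinSuccAbove ν 0
    have htail : Measurable (fun x : Fin (n+1) → ℝ => fun k : Fin n => x k.succ) := by fun_prop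
    have key : ∀ᵐ z ∂((ν 0).prod (Measure.pi fun k => ν (Fin.succAbove 0 k))),
        (Matrix.of (Fin.cons z.1 z.2 : Fin (n+1) → Fin (n+1) → ℝ)).det ≠ 0 := by
      apply aux_swap_null
      · have : Measurable fun z : (Fin (n+1) → ℝ) × (Fin n → Fin (n+1) → ℝ) =>
            (Matrix.of (Fin.cons z.1 z.2 : Fin (n+1) → Fin (n+1) → ℝ)).det := by
          apply Continuous.measurable
          apply Continuous.matrix_det
          refine continuous_matrix fun i j => ?_
          refine Fin.cases ?_ (fun k => ?_) i
          · simp; fun_prop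
          · simp; fun_prop
        exact (this (measurableSet_singleton 0)).compl
      · have : ∀ k : Fin n, IsProbabilityMeasure ((ν (Fin.succAbove 0 k)).map
            (fun x : Fin (n+1) → ℝ => fun k : Fin n => x k.succ)) :=
          fun k => Measure.isProbabilityMeasure_map htail.aemeasurable
        have h1 := ih (fun k => (ν (Fin.succAbove 0 k)).map
            (fun x : Fin (n+1) → ℝ => fun k : Fin n => x k.succ)) (by
          intro i a ha
          rw [ae_map_iff htail.aemeasurable]
          · have := hν (Fin.succAbove 0 i) (Fin.cons 0 a) (by
              intro h
              apply ha
              funext k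
              have := congrFun h k.succ
              simpa using this)
            filter_upwards [this] with x hx
            simpa [dotProduct, Fin.sum_univ_succ] using hx
          · have : Measurable fun x : Fin n → ℝ => a ⬝ᵥ x := by unfold dotProduct; fun_prop
            exact (this (measurableSet_singleton 0)).compl)
        rw [← Measure.pi_map_pi (fun i => htail.aemeasurable)] at h1
        have h2 := ae_of_ae_map (Measurable.aemeasurable (by fun_prop)) h1
        filter_upwards [h2] with y hy
        have h3 := hν 0 (fun j => (-1) ^ (j : ℕ) *
          ((Matrix.of (Fin.cons 0 y : Fin (n+1) → Fin (n+1) → ℝ)).submatrix Fin.succ j.succAbove).det) (by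
          intro h
          apply hy
          have := congrFun h 0
          simp at this
          exact this)
        filter_upwards [h3] with x hx
        rw [Matrix.det_succ_row_zero]
        intro h
        apply hx
        rw [← h, dotProduct]
        refine Finset.sum_congr rfl fun j _ => ?_
        have : ((Matrix.of (Fin.cons 0 y : Fin (n+1) → Fin (n+1) → ℝ)).submatrix Fin.succ j.succAbove)
          = ((Matrix.of (Fin.cons x y : Fin (n+1) → Fin (n+1) → ℝ)).submatrix Fin.succ j.succAbove) := by
          ext; simp
        rw [this]
        simp
        ring
    filter_upwards [hmp.quasiMeasurePreserving.ae key] with x hx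
    intro h
    apply hx
    rw [← h]
    congr 2
    funext i
    refine Fin.cases ?_ (fun k => ?_) i <;> simp [MeasurableEquiv.piFinSuccAbove_apply, Fin.tail]

lemma aux_reindex {M : Type*} [AddCommMonoid M] (m : ℕ) (f : ℕ → M) :
    ∑ i ∈ Finset.Icc 1 m, f i = ∑ i ∈ Finset.range m, f (i + 1) := by
  induction m with
  | zero => simp
  | succ n ih => rw [Finset.sum_Icc_succ_top (by omega), ih, Finset.sum_range_succ]

/-- The centred slope on the `i`-th block, indexed from zero. -/
noncomputable def auxV (d : ℕ) (x : ℝ → (Fin d → ℝ)) (c : ℕ → ℝ) (i : ℕ) : Fin d → ℝ :=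
  (c (i + 1) - c i)⁻¹ • (x (c (i + 1)) - x (c i)) - x 1

lemma aux_gm (d m : ℕ) (x : ℝ → (Fin d → ℝ)) (c : ℕ → ℝ) :
    gm d m x c = ((m : ℝ) - 1)⁻¹ •
      ∑ i ∈ Finset.range m, vecMulVec (auxV d x c i) (auxV d x c i) := by
  unfold gm
  rw [aux_reindex]
  simp [auxV]

lemma aux_gm_mulVec (d m : ℕ) (x : ℝ → (Fin d → ℝ)) (c : ℕ → ℝ) (u : Fin d → ℝ) :
    gm d m x c *ᵥ u = ((m : ℝ) - 1)⁻¹ •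
      ∑ i ∈ Finset.range m, (auxV d x c i ⬝ᵥ u) • auxV d x c i := by
  rw [aux_gm, Matrix.smul_mulVec, Matrix.sum_mulVec]
  simp [vecMulVec_mulVec]

lemma aux_sum_zero (d m : ℕ) (x : ℝ → (Fin d → ℝ)) (c : ℕ → ℝ) (hx : x 0 = 0)
    (hc0 : c 0 = 0) (hcm : c m = 1) (hmono : ∀ i < m, c i < c (i + 1)) :
    ∑ i ∈ Finset.range m, (c (i + 1) - c i) • auxV d x c i = 0 := by
  have h1 : ∀ i ∈ Finset.range m, (c (i + 1) - c i) • auxV d x c i =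
      (x (c (i + 1)) - x (c i)) - (c (i + 1) - c i) • x 1 := by
    intro i hi
    have := hmono i (Finset.mem_range.1 hi)
    rw [auxV, smul_sub, smul_smul, mul_inv_cancel₀ (by linarith), one_smul]
  rw [Finset.sum_congr rfl h1, Finset.sum_sub_distrib, ← Finset.sum_smul,
    Finset.sum_range_sub (fun i => x (c i)), Finset.sum_range_sub, hc0, hcm, hx]
  simp

lemma aux_singular (d m : ℕ) (hm : 1 ≤ m) (hmd : m ≤ d) (x : ℝ → (Fin d → ℝ)) (c : ℕ → ℝ)
    (hx : x 0 = 0)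
    (hc0 : c 0 = 0) (hcm : c m = 1) (hmono : ∀ i < m, c i < c (i + 1)) :
    (gm d m x c).det = 0 := by
  obtain ⟨n, rfl⟩ : ∃ n, m = n + 1 := ⟨m - 1, by omega⟩
  let A : Matrix (Fin n) (Fin d) ℝ := Matrix.of fun i => auxV d x c i
  have hker : LinearMap.ker (Matrix.mulVecLin A) ≠ ⊥ :=
    LinearMap.ker_ne_bot_of_finrank_lt (by simp; omega)
  obtain ⟨u, hu, hu0⟩ := (Submodule.ne_bot_iff _).1 hker
  have hu1 : ∀ i < n, auxV d x c i ⬝ᵥ u = 0 := fun i hi => by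
    have := congrFun (show A *ᵥ u = 0 from hu) ⟨i, hi⟩
    simpa [A, Matrix.mulVec] using this
  have hs := congrArg (fun v => v ⬝ᵥ u) (aux_sum_zero d (n+1) x c hx hc0 hcm hmono)
  simp only [sum_dotProduct, smul_dotProduct, zero_dotProduct] at hs
  rw [Finset.sum_range_succ, Finset.sum_eq_zero (fun i hi => by
    rw [hu1 i (Finset.mem_range.1 hi), smul_zero]), zero_add, smul_eq_mul, mul_eq_zero] at hs
  have hn : auxV d x c n ⬝ᵥ u = 0 := by
    rcases hs with h | h
    · have := hmono n (by omega); linarith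
    · exact h
  rw [← Matrix.exists_mulVec_eq_zero_iff]
  refine ⟨u, hu0, ?_⟩
  rw [aux_gm_mulVec, Finset.sum_eq_zero, smul_zero]
  intro i hi
  rw [Finset.mem_range] at hi
  have : auxV d x c i ⬝ᵥ u = 0 := by
    rcases Nat.lt_succ_iff_lt_or_eq.1 hi with h | rfl
    · exact hu1 i h
    · exact hn
  rw [this, zero_smul]

lemma aux_posDef (d m : ℕ) (hd : 0 < d) (hmd : d + 1 ≤ m) (x : ℝ → (Fin d → ℝ)) (c : ℕ → ℝ)
    (hmono : ∀ i < m, c i < c (i + 1))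
    (hdet : (Matrix.of (fun i : Fin (d + 1) =>
      (Fin.cons (c (i + 1) - c i) (x (c (i + 1)) - x (c i)) : Fin (d + 1) → ℝ))).det ≠ 0) :
    (gm d m x c).PosDef := by
  have hm1 : (0 : ℝ) < (m : ℝ) - 1 := by
    have : (2 : ℝ) ≤ m := by exact_mod_cast (by omega : 2 ≤ m)
    linarith
  refine Matrix.PosDef.of_dotProduct_mulVec_pos ?_ fun u hu => ?_
  · rw [aux_gm]
    ext i j
    simp [Matrix.sum_apply, vecMulVec_apply, mul_comm]
  · rw [aux_gm_mulVec, dotProduct_smul, dotProduct_sum]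
    refine smul_pos (inv_pos.2 hm1) ?_
    have hterm : ∀ i, star u ⬝ᵥ ((auxV d x c i ⬝ᵥ u) • auxV d x c i) =
        (auxV d x c i ⬝ᵥ u) ^ 2 := by
      intro i
      rw [star_trivial, dotProduct_smul, dotProduct_comm u, smul_eq_mul, sq]
    simp only [hterm]
    refine lt_of_le_of_ne (Finset.sum_nonneg fun i _ => sq_nonneg _) fun h => ?_
    rw [eq_comm, Finset.sum_eq_zero_iff_of_nonneg (fun i _ => sq_nonneg _)] at h
    apply hdet
    rw [← Matrix.exists_mulVec_eq_zero_iff]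
    refine ⟨Fin.cons (-(x 1 ⬝ᵥ u)) u, ?_, ?_⟩
    · intro h0
      apply hu
      funext k
      simpa using congrFun h0 k.succ
    · funext i
      have hi : (i : ℕ) < m := by omega
      have h1 := h i (Finset.mem_range.2 hi)
      have h2 := hmono i hi
      rw [sq_eq_zero_iff, auxV, sub_dotProduct, smul_dotProduct, smul_eq_mul, sub_eq_zero,
        inv_mul_eq_iff_eq_mul₀ (by linarith)] at h1
      have h3 : (x (c (i + 1)) - x (c i)) ⬝ᵥ u =
        ∑ j, (x (c (i + 1)) j - x (c i) j) * u j := rfl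
      simp only [Matrix.mulVec, dotProduct, Fin.sum_univ_succ, Matrix.of_apply, Fin.cons_zero,
        Fin.cons_succ, Pi.sub_apply, Pi.zero_apply] at h1 ⊢
      rw [h1]
      ring

/-- if `m ≥ d + 1` then `g_m(B, w)` is positive definite almost surely;
if `m ≤ d` then `g_m(B, w)` is singular almost surely. -/
theorem stmt_14 (d m : ℕ) (hd : 0 < d) (hm : 1 ≤ m)
    {Ω : Type*} [MeasurableSpace Ω] (μ : Measure Ω) [IsProbabilityMeasure μ]
    (B : ℝ → Ω → (Fin d → ℝ)) (hB : IsStdBM d μ B)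
    (c : ℕ → ℝ) (hc0 : c 0 = 0) (hcm : c m = 1) (hmono : ∀ i < m, c i < c (i + 1)) :
    (d + 1 ≤ m → ∀ᵐ ω ∂μ, (gm d m (fun t => B t ω) c).PosDef) ∧
    (m ≤ d → ∀ᵐ ω ∂μ, (gm d m (fun t => B t ω) c).det = 0) := by
  obtain ⟨hB0, -, hBm, hBi, hBg⟩ := hB
  refine ⟨fun hmd => ?_, fun hmd => Filter.Eventually.of_forall fun ω =>
    aux_singular d m hm hmd _ c (hB0 ω) hc0 hcm hmono⟩
  have htm : Monotone (fun i => c (min i m)) := by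
    refine monotone_nat_of_le_succ fun i => ?_
    rcases lt_or_ge i m with h | h
    · rw [min_eq_left h.le, min_eq_left (by omega)]
      exact (hmono i h).le
    · rw [min_eq_right h, min_eq_right (by omega)]
  have ht01 : ∀ i, c (min i m) ∈ Set.Icc (0 : ℝ) 1 := by
    intro i
    constructor
    · have := htm (Nat.zero_le i)
      simpa [hc0] using this
    · have := htm (le_max_left i m)
      simpa [hcm] using this
  have hc01 : ∀ i ≤ m, c i ∈ Set.Icc (0 : ℝ) 1 := by
    intro i hi
    have := ht01 i
    rwa [min_eq_left hi] at this
  have hind := hBi (d + 1) _ htm ht01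
  let g : ∀ i : Fin (d + 1), (Fin d → ℝ) → (Fin (d + 1) → ℝ) :=
    fun i y => Fin.cons (c (i + 1) - c i) y
  have hg : ∀ i, Measurable (g i) := by
    intro i
    refine measurable_pi_iff.2 fun j => ?_
    refine Fin.cases ?_ (fun k => ?_) j
    · simp [g]
    · simpa [g] using measurable_pi_apply k
  have hind2 := hind.comp g hg
  have heq : (fun i : Fin (d + 1) => g i ∘
      (fun ω => B (c (min ((i : ℕ) + 1) m)) ω - B (c (min (i : ℕ) m)) ω)) =
      fun i : Fin (d + 1) => g i ∘ (fun ω => B (c (i + 1)) ω - B (c i) ω) := by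
    funext i
    rw [min_eq_left (by omega), min_eq_left (by omega)]
  rw [heq] at hind2
  have hΔ : ∀ i : Fin (d + 1), Measurable (fun ω => B (c (i + 1)) ω - B (c i) ω) := fun i =>
    (hBm _ (hc01 _ (by omega))).sub (hBm _ (hc01 _ (by omega)))
  have hX : ∀ i : Fin (d + 1), Measurable (g i ∘ (fun ω => B (c (i + 1)) ω - B (c i) ω)) :=
    fun i => (hg i).comp (hΔ i)
  have hmap := iIndepFun.map_fun_eq_pi_map (fun i => (hX i).aemeasurable) hind2
  have hprob : ∀ i : Fin (d + 1), IsProbabilityMeasure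
      (μ.map (g i ∘ (fun ω => B (c (i + 1)) ω - B (c i) ω))) :=
    fun i => Measure.isProbabilityMeasure_map (hX i).aemeasurable
  have hdet := aux_det (d + 1)
    (fun i => μ.map (g i ∘ (fun ω => B (c (i + 1)) ω - B (c i) ω))) (by
    intro i a ha
    have hlt := hmono i (by omega)
    rw [← Measure.map_map (hg i) (hΔ i),
      hBg _ _ (hc01 i (by omega)).1 hlt.le (hc01 (i + 1) (by omega)).2]
    have hmeas : Measurable fun x : Fin (d + 1) → ℝ => a ⬝ᵥ x := by
      unfold dotProduct; fun_prop
    have hset : MeasurableSet {x : Fin (d + 1) → ℝ | a ⬝ᵥ x ≠ 0} :=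
      (hmeas (measurableSet_singleton 0)).compl
    rw [ae_map_iff (hg i).aemeasurable hset]
    have hsplit : ∀ y, a ⬝ᵥ g i y = (fun k : Fin d => a k.succ) ⬝ᵥ y +
        a 0 * (c (i + 1) - c i) := by
      intro y
      simp only [dotProduct, Fin.sum_univ_succ, g, Fin.cons_zero, Fin.cons_succ]
      ring
    simp only [hsplit]
    by_cases hz : (fun k : Fin d => a k.succ) = 0
    · refine Filter.Eventually.of_forall fun y => ?_
      rw [hz, zero_dotProduct, zero_add]
      refine mul_ne_zero ?_ (by linarith)
      intro h0
      apply ha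
      funext k
      refine Fin.cases h0 (fun k => ?_) k
      exact congrFun hz k
    · obtain ⟨n, rfl⟩ : ∃ n, d = n + 1 := ⟨d - 1, by omega⟩
      have hna : NullSingletonClass (gaussianReal 0 (Real.toNNReal (c (i + 1) - c i))) :=
        nullSingletonClass_gaussianReal (by
          rw [Ne, Real.toNNReal_eq_zero]; linarith)
      exact aux_hyper n _ _ _ hz)
  rw [← hmap] at hdet
  have hfin := ae_of_ae_map (measurable_pi_iff.2 hX).aemeasurable hdet
  filter_upwards [hfin] with ω hω
  exact aux_posDef d m hd hmd _ c hmono hω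
end
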